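/- arXiv:1601.05360 — 2 statements merged into one kernel-verified Lean document; each statement's English description precedes it below -/
import Mathlib

section
/- Every function in GPVAL is real-analytic: if I ⊆ ℝ^d is open and connected and f : I → ℝ^e belongs to GPVAL, then each component of f is analytic at every point of I. -/
noncomputable section

/-- The continuous linear map `ℝ^d → ℝ^n` associated to an `n × d` real matrix. -/
def matLin {n d : ℕ} (M : Matrix (Fin n) (Fin d) ℝ) : (Fin d → ℝ) →L[ℝ] (Fin n → ℝ) :=
  LinearMap.toContinuousLinearMap (Matrix.toLin' M)

/-- The class `GPVAL` of polynomially bounded generable functions on `I`. -/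
def GPVAL {d e : ℕ} (I : Set (Fin d → ℝ)) (f : (Fin d → ℝ) → (Fin e → ℝ)) : Prop :=
  ∃ (sp : Polynomial ℝ) (n : ℕ) (hn : e ≤ n)
    (p : Matrix (Fin n) (Fin d) (MvPolynomial (Fin n) ℝ))
    (x₀ : Fin d → ℝ) (y₀ : Fin n → ℝ) (y : (Fin d → ℝ) → (Fin n → ℝ)),
    (∀ a : ℝ, 0 ≤ a → 0 ≤ sp.eval a) ∧
    x₀ ∈ I ∧ y x₀ = y₀ ∧
    (∀ x ∈ I, HasFDerivAt y (matLin (fun i j => MvPolynomial.eval (y x) (p i j))) x) ∧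
    (∀ x ∈ I, ∀ i : Fin e, f x i = y x (Fin.castLE hn i)) ∧
    (∀ x ∈ I, ‖y x‖ ≤ sp.eval ‖x‖)

/-!
The radial path `u t = y (x + t • h)`, `0 ≤ t ≤ 1`, solves `u t = y x + ∫ s in 0..t, F (u s) h`.
Read in the Banach space of continuous paths, this is an equation `Φ (h, u) = y x` in which `Φ` is
analytic near `h = 0`, `u = y x`, because superposition with an analytic map is an analytic
operator. As `Φ (0, ·)` is the identity, the analytic implicit function theorem makes `u`, and
hence its endpoint `y (x + h)`, analytic in `h`.
-/

open Filter Metric Set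
open scoped Topology ContDiff

section Superposition

variable {K : Type*} [TopologicalSpace K]

theorem update_continuousMap_apply {V : Type*} [TopologicalSpace V] {ι : Type*} [DecidableEq ι]
    (u : ι → C(K, V)) (i : ι) (v : C(K, V)) (t : K) :
    (fun j => Function.update u i v j t) = Function.update (fun j => u j t) i (v t) :=
  funext fun j => Function.apply_update (fun _ (w : C(K, V)) => w t) u i v j

/-- The superposition (Nemytskii) operator `u ↦ f ∘ u`, with the junk value `0` when `f ∘ u` is
not continuous. -/
def superposition {V G : Type*} [TopologicalSpace V] [TopologicalSpace G] [Zero G]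
    (f : V → G) (u : C(K, V)) : C(K, G) :=
  ContinuousMap.mkD (f ∘ u) 0

variable [CompactSpace K] {𝕜 : Type*} [NontriviallyNormedField 𝕜]
  {V : Type*} [NormedAddCommGroup V] [NormedSpace 𝕜 V]
  {G : Type*} [NormedAddCommGroup G] [NormedSpace 𝕜 G] {ι : Type*} [Fintype ι]

/-- A multilinear map acting pointwise on tuples of continuous maps. -/
def pointwiseMultilinear (f : ContinuousMultilinearMap 𝕜 (fun _ : ι => V) G) :
    ContinuousMultilinearMap 𝕜 (fun _ : ι => C(K, V)) C(K, G) :=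
  MultilinearMap.mkContinuous
    { toFun := fun u => ⟨fun t => f fun i => u i t, by fun_prop⟩
      map_update_add' := fun u i v w => by
        ext t
        simp [update_continuousMap_apply]
      map_update_smul' := fun u i c v => by
        ext t
        simp [update_continuousMap_apply] }
    ‖f‖ fun u => by
      refine (ContinuousMap.norm_le _ (by positivity)).2 fun t => ?_
      refine (f.le_opNorm _).trans ?_
      gcongr with i
      exact (u i).norm_coe_le_norm t

theorem norm_pointwiseMultilinear_le (f : ContinuousMultilinearMap 𝕜 (fun _ : ι => V) G) :
    ‖pointwiseMultilinear (K := K) f‖ ≤ ‖f‖ :=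
  MultilinearMap.mkContinuous_norm_le _ (norm_nonneg f) _

theorem hasFPowerSeriesOnBall_superposition_const [CompleteSpace G] {f : V → G}
    {p : FormalMultilinearSeries 𝕜 V G} {w : V} {r : ENNReal}
    (hf : HasFPowerSeriesOnBall f p w r) :
    HasFPowerSeriesOnBall (superposition (K := K) f) (fun n => pointwiseMultilinear (p n))
      (ContinuousMap.const K w) r := by
  set P : FormalMultilinearSeries 𝕜 C(K, V) C(K, G) := fun n => pointwiseMultilinear (p n)
  have hP : r ≤ P.radius := hf.r_le.trans <|
    FormalMultilinearSeries.radius_le_of_le fun n => norm_pointwiseMultilinear_le (p n)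
  refine ⟨hP, hf.r_pos, fun {u} hu => ?_⟩
  have hsum : HasSum (fun n => P n fun _ => u) (P.sum u) := P.hasSum (eball_subset_eball hP hu)
  have hball (t : K) : u t ∈ eball (0 : V) r := by
    rw [mem_eball_zero_iff] at hu ⊢
    exact (enorm_le_iff_norm_le.2 (u.norm_coe_le_norm t)).trans_lt hu
  have hcomp : f ∘ (ContinuousMap.const K w + u) = P.sum u :=
    funext fun t => (hf.hasSum (hball t)).unique (ContinuousMap.hasSum_apply hsum t)
  rwa [superposition, hcomp, ContinuousMap.mkD_eq_self]

theorem analyticAt_superposition_const [CompleteSpace G] {f : V → G} {w : V}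
    (hf : AnalyticAt 𝕜 f w) :
    AnalyticAt 𝕜 (superposition f) (ContinuousMap.const K w) :=
  let ⟨_, _, hp⟩ := hf
  (hasFPowerSeriesOnBall_superposition_const hp).analyticAt

end Superposition

section Volterra

variable {W : Type*} [NormedAddCommGroup W] [NormedSpace ℝ W]

/-- The Volterra operator `u ↦ ∫ s in a..·, u s` on continuous maps. -/
def volterra {a b : ℝ} (hab : a ≤ b) : C(Icc a b, W) →L[ℝ] C(Icc a b, W) :=
  have integrable (u : C(Icc a b, W)) (c d : ℝ) :
      IntervalIntegrable (IccExtend hab u) MeasureTheory.volume c d :=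
    u.continuous.Icc_extend'.intervalIntegrable c d
  LinearMap.mkContinuous
    { toFun := fun u => ⟨fun t => ∫ s in a..t, IccExtend hab u s,
        (intervalIntegral.continuous_primitive (integrable u) a).comp continuous_subtype_val⟩
      map_add' := fun u v => by
        ext t
        exact intervalIntegral.integral_add (integrable u a t) (integrable v a t)
      map_smul' := fun c u => by
        ext t
        exact intervalIntegral.integral_smul c _ }
    (b - a) fun u => by
      refine (ContinuousMap.norm_le _ (mul_nonneg (sub_nonneg.2 hab) (norm_nonneg u))).2 fun t => ?_
      calc ‖∫ s in a..t, IccExtend hab u s‖ ≤ ‖u‖ * |t - a| :=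
            intervalIntegral.norm_integral_le_of_norm_le_const fun s _ => u.norm_coe_le_norm _
        _ ≤ (b - a) * ‖u‖ := by
            rw [abs_of_nonneg (sub_nonneg.2 t.2.1), mul_comm]
            gcongr
            exact t.2.2

theorem volterra_apply {a b : ℝ} (hab : a ≤ b) (u : C(Icc a b, W)) (t : Icc a b) :
    volterra hab u t = ∫ s in a..t, IccExtend hab u s :=
  rfl

end Volterra

section RadialPath

variable {E : Type*} [NormedAddCommGroup E] [NormedSpace ℝ E]
  {W : Type*} [NormedAddCommGroup W] {y : E → W} {x h : E} {r : ℝ}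

/-- The path `t ↦ y (x + t • h)`, `0 ≤ t ≤ 1`, with the junk value `0` when it is not
continuous. -/
def radialPath (y : E → W) (x h : E) : C(unitInterval, W) :=
  ContinuousMap.mkD (fun t => y (x + (t : ℝ) • h)) 0

theorem add_smul_mem_ball (hh : ‖h‖ < r) {t : ℝ} (ht : t ∈ unitInterval) :
    x + t • h ∈ ball x r := by
  rw [mem_ball_iff_norm, add_sub_cancel_left, norm_smul, Real.norm_of_nonneg ht.1]
  exact (mul_le_of_le_one_left (norm_nonneg h) ht.2).trans_lt hh

theorem radialPath_apply (hy : ContinuousOn y (ball x r)) (hh : ‖h‖ < r)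
    (t : unitInterval) : radialPath y x h t = y (x + (t : ℝ) • h) :=
  ContinuousMap.mkD_apply_of_continuous <|
    hy.comp_continuous (by fun_prop) fun s => add_smul_mem_ball hh s.2

theorem tendsto_radialPath (hy : ∀ᶠ z in 𝓝 x, ContinuousAt y z) :
    Tendsto (radialPath y x) (𝓝 0) (𝓝 (ContinuousMap.const unitInterval (y x))) := by
  obtain ⟨r, hr, hball⟩ := eventually_nhds_iff_ball.1 hy
  have hcont : ContinuousOn y (ball x r) := fun z hz => (hball z hz).continuousWithinAt
  rw [Metric.tendsto_nhds_nhds]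
  intro ε hε
  obtain ⟨δ, hδ, hclose⟩ := Metric.continuousAt_iff.1 hy.self_of_nhds ε hε
  refine ⟨min r δ, lt_min hr hδ, fun {h} hh => ?_⟩
  rw [dist_zero_right, lt_min_iff] at hh
  rw [ContinuousMap.dist_lt_iff hε]
  intro t
  rw [radialPath_apply hcont hh.1]
  exact hclose (add_smul_mem_ball hh.2 t.2)

end RadialPath

section TotalDifferentialEquation

variable {E : Type*} [NormedAddCommGroup E] [NormedSpace ℝ E]
  {W : Type*} [NormedAddCommGroup W] [NormedSpace ℝ W] {F : W → E →L[ℝ] W}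
  {y : E → W} {x h : E} {r : ℝ}

/-- The pairing `(h, u) ↦ (t ↦ (h, u t))`. -/
def constProd (K : Type*) [TopologicalSpace K] : E × C(K, W) →L[ℝ] C(K, E × W) :=
  ((ContinuousLinearMap.inl ℝ E W).compLeftContinuous ℝ K ∘L .const ℝ K).coprod
    ((ContinuousLinearMap.inr ℝ E W).compLeftContinuous ℝ K)

theorem constProd_apply (K : Type*) [TopologicalSpace K] (h : E) (u : C(K, W)) (t : K) :
    constProd K (h, u) t = (h, u t) := by
  simp [constProd]

/-- The residual `u - ∫₀ F (u s) h ds` of the integral form of `u' = F (u ·) h`, as a function of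
the pair `(h, u)`. -/
def integralResidual (F : W → E →L[ℝ] W) (q : E × C(unitInterval, W)) : C(unitInterval, W) :=
  q.2 - volterra zero_le_one
    (superposition (fun z : E × W => F z.2 z.1) (constProd unitInterval q))

theorem integralResidual_zero_left (u : C(unitInterval, W)) : integralResidual F (0, u) = u := by
  have h : (fun z : E × W => F z.2 z.1) ∘ constProd unitInterval (0, u) =
      (0 : C(unitInterval, W)) := by
    ext t
    simp [constProd_apply]
  simp only [integralResidual, superposition, h, ContinuousMap.mkD_eq_self, map_zero, sub_zero]

theorem analyticAt_integralResidual [CompleteSpace W] {w : W} (hF : AnalyticAt ℝ F w) :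
    AnalyticAt ℝ (integralResidual F) (0, ContinuousMap.const unitInterval w) := by
  have hpair : constProd unitInterval ((0 : E), ContinuousMap.const unitInterval w) =
      ContinuousMap.const unitInterval (0, w) :=
    ContinuousMap.ext (constProd_apply _ _ _)
  have hfield : AnalyticAt ℝ (fun z : E × W => F z.2 z.1) (0, w) :=
    ((ContinuousLinearMap.id ℝ (E →L[ℝ] W)).analyticAt_bilinear _).comp₂
      (AnalyticAt.fun_comp (g := F) (f := Prod.snd) hF analyticAt_snd) analyticAt_fst
  have hsup := (analyticAt_superposition_const (K := unitInterval) hfield).comp_of_eq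
    (ContinuousLinearMap.analyticAt (constProd unitInterval) _) hpair
  exact analyticAt_snd.sub (((volterra zero_le_one).analyticAt _).fun_comp hsup)

theorem fderiv_integralResidual_comp_inr [CompleteSpace W] {w : W} (hF : AnalyticAt ℝ F w) :
    fderiv ℝ (integralResidual F) (0, ContinuousMap.const unitInterval w) ∘L .inr ℝ E _ =
      .id ℝ C(unitInterval, W) := by
  have h := (analyticAt_integralResidual hF).differentiableAt.hasFDerivAt.comp
    (ContinuousMap.const unitInterval w) (hasFDerivAt_prodMk_right 0 _)
  have hid : integralResidual F ∘ (fun u => ((0 : E), u)) = id := funext integralResidual_zero_left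
  rw [hid] at h
  exact h.unique (hasFDerivAt_id _)

theorem hasDerivAt_radial (hy : ∀ z ∈ ball x r, HasFDerivAt y (F (y z)) z) (hh : ‖h‖ < r)
    {s : ℝ} (hs : s ∈ unitInterval) :
    HasDerivAt (fun s : ℝ => y (x + s • h)) (F (y (x + s • h)) h) s := by
  have hline : HasDerivAt (fun s : ℝ => x + s • h) h s := by
    simpa using ((hasDerivAt_id s).smul_const h).const_add x
  exact (hy _ (add_smul_mem_ball hh hs)).comp_hasDerivAt s hline

theorem continuousOn_radial_velocity (hF : ∀ z ∈ ball x r, ContinuousAt F (y z))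
    (hy : ∀ z ∈ ball x r, HasFDerivAt y (F (y z)) z) (hh : ‖h‖ < r) :
    ContinuousOn (fun s : ℝ => F (y (x + s • h)) h) unitInterval := by
  intro s hs
  have hFy : ContinuousAt (fun s : ℝ => F (y (x + s • h))) s :=
    (hF _ (add_smul_mem_ball hh hs)).comp_of_eq (hasDerivAt_radial hy hh hs).continuousAt rfl
  exact (hFy.clm_apply continuousAt_const).continuousWithinAt

theorem integral_radial_velocity [CompleteSpace W]
    (hF : ∀ z ∈ ball x r, ContinuousAt F (y z))
    (hy : ∀ z ∈ ball x r, HasFDerivAt y (F (y z)) z) (hh : ‖h‖ < r) (t : unitInterval) :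
    ∫ s in (0 : ℝ)..t, F (y (x + s • h)) h = y (x + (t : ℝ) • h) - y x := by
  have hsub : uIcc 0 (t : ℝ) ⊆ unitInterval := by
    rw [uIcc_of_le t.2.1]
    exact Icc_subset_Icc_right t.2.2
  rw [intervalIntegral.integral_eq_sub_of_hasDerivAt
    (fun s hs => hasDerivAt_radial hy hh (hsub hs))
    ((continuousOn_radial_velocity hF hy hh).mono hsub).intervalIntegrable]
  simp

theorem integralResidual_radialPath [CompleteSpace W]
    (hF : ∀ z ∈ ball x r, ContinuousAt F (y z))
    (hy : ∀ z ∈ ball x r, HasFDerivAt y (F (y z)) z) (hh : ‖h‖ < r) :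
    integralResidual F (h, radialPath y x h) = ContinuousMap.const unitInterval (y x) := by
  have hpath := radialPath_apply
    (fun z hz => (hy z hz).continuousAt.continuousWithinAt) hh
  have hcomp : (fun z : E × W => F z.2 z.1) ∘ constProd unitInterval (h, radialPath y x h) =
      unitInterval.domRestrict fun s : ℝ => F (y (x + s • h)) h := by
    ext t
    simp [constProd_apply, hpath]
  ext t
  have hintegral : volterra zero_le_one (superposition (fun z : E × W => F z.2 z.1)
      (constProd unitInterval (h, radialPath y x h))) t = y (x + (t : ℝ) • h) - y x := by
    rw [superposition, hcomp, ContinuousMap.mkD_of_continuousOn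
      (continuousOn_radial_velocity hF hy hh), volterra_apply, ← integral_radial_velocity hF hy hh]
    refine intervalIntegral.integral_congr fun s hs => ?_
    rw [uIcc_of_le t.2.1] at hs
    exact IccExtend_of_mem _ _ ⟨hs.1, hs.2.trans t.2.2⟩
  rw [integralResidual, ContinuousMap.sub_apply, hintegral, hpath, sub_sub_cancel]
  rfl

theorem analyticAt_radialPath [CompleteSpace E] [CompleteSpace W]
    (hF : AnalyticAt ℝ F (y x)) (hy : ∀ᶠ z in 𝓝 x, HasFDerivAt y (F (y z)) z) :
    AnalyticAt ℝ (radialPath y x) 0 := by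
  have hFcont : ∀ᶠ z in 𝓝 x, ContinuousAt F (y z) :=
    hy.self_of_nhds.continuousAt.eventually hF.eventually_continuousAt
  obtain ⟨r, hr, hball⟩ := eventually_nhds_iff_ball.1 (hFcont.and hy)
  set c := ContinuousMap.const unitInterval (y x)
  have hres : ContDiffAt ℝ ω (integralResidual F) (0, c) :=
    (analyticAt_integralResidual hF).contDiffAt
  have hinv : (fderiv ℝ (integralResidual F) (0, c) ∘L .inr ℝ E _).IsInvertible := by
    rw [fderiv_integralResidual_comp_inr hF]
    exact ⟨.refl ℝ _, rfl⟩
  refine ((hres.contDiffAt_implicitFunction (by simp) hinv).analyticAt).congr ?_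
  have htendsto : Tendsto (fun h => (h, radialPath y x h)) (𝓝 0) (𝓝 ((0 : E), c)) :=
    tendsto_id.prodMk_nhds (tendsto_radialPath (hy.mono fun _ hz => hz.continuousAt))
  have huniq := htendsto.eventually (hres.eventually_apply_eq_iff_implicitFunction (by simp) hinv)
  filter_upwards [huniq, ball_mem_nhds 0 hr] with h himplicit hh
  refine himplicit.1 ?_
  rw [integralResidual_radialPath (fun z hz => (hball z hz).1) (fun z hz => (hball z hz).2)
    (mem_ball_zero_iff.1 hh), integralResidual_zero_left]

theorem gpval_analytic_general [CompleteSpace E] [CompleteSpace W]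
    (hF : AnalyticAt ℝ F (y x)) (hy : ∀ᶠ z in 𝓝 x, HasFDerivAt y (F (y z)) z) :
    AnalyticAt ℝ y x := by
  obtain ⟨r, hr, hball⟩ := eventually_nhds_iff_ball.1 hy
  have hcont : ContinuousOn y (ball x r) := fun z hz =>
    (hball z hz).continuousAt.continuousWithinAt
  have hendpoint : AnalyticAt ℝ (fun z => radialPath y x (z - x) 1) x :=
    ((ContinuousMap.evalCLM ℝ (1 : unitInterval)).analyticAt _).fun_comp <|
      (analyticAt_radialPath hF hy).comp_of_eq (analyticAt_id.fun_sub analyticAt_const) (sub_self x)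
  refine hendpoint.congr ?_
  filter_upwards [ball_mem_nhds x hr] with z hz
  simp [radialPath_apply hcont (mem_ball_iff_norm.1 hz)]

end TotalDifferentialEquation

theorem analyticAt_matLin {n d : ℕ} {V : Type*} [NormedAddCommGroup V] [NormedSpace ℝ V]
    {M : V → Matrix (Fin n) (Fin d) ℝ} {v : V} (hM : ∀ i j, AnalyticAt ℝ (fun v => M v i j) v) :
    AnalyticAt ℝ (fun v => matLin (M v)) v := by
  let L : (Fin n → Fin d → ℝ) →ₗ[ℝ] (Fin d → ℝ) →L[ℝ] (Fin n → ℝ) :=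
    LinearMap.toContinuousLinearMap.toLinearMap ∘ₗ Matrix.toLin'.toLinearMap
  have hentries : AnalyticAt ℝ (fun v i j => M v i j) v := .pi fun i => .pi fun j => hM i j
  exact (L.toContinuousLinearMap.analyticAt _).comp hentries

/-- **Every function in `GPVAL` is real-analytic**: each component of `f` is analytic
at every point of the open connected domain `I`. -/
theorem gpval_analytic {d e : ℕ} (I : Set (Fin d → ℝ))
    (hIopen : IsOpen I) (hIconn : IsConnected I)
    (f : (Fin d → ℝ) → (Fin e → ℝ)) (hf : GPVAL I f) :
    ∀ x ∈ I, ∀ i : Fin e, AnalyticAt ℝ (fun z => f z i) x := by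
  obtain ⟨_, n, hn, p, _, _, y, _, _, _, hy, hfy, _⟩ := hf
  intro x hx i
  have hfield : AnalyticAt ℝ (fun w => matLin fun i j => MvPolynomial.eval w (p i j)) (y x) :=
    analyticAt_matLin fun i j => AnalyticOnNhd.eval_mvPolynomial (p i j) (y x) trivial
  have hI : ∀ᶠ z in 𝓝 x, z ∈ I := hIopen.mem_nhds hx
  have hy_analytic : AnalyticAt ℝ y x := gpval_analytic_general hfield (hI.mono hy)
  exact (analyticAt_pi_iff.1 hy_analytic (Fin.castLE hn i)).congr <|
    hI.mono fun z hz => (hfy z hz i).symm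
end
end

section
/- AWP is contained in AP: every partial function f :⊆ ℝⁿ → ℝᵐ that belongs to AWP also belongs to AP; consequently AP = AWP. -/
noncomputable section

/-- Evaluation of a vector of multivariate polynomials at a point. -/
def pEval {d e : ℕ} (p : Fin e → MvPolynomial (Fin d) ℝ) (x : Fin d → ℝ) : Fin e → ℝ :=
  fun i => MvPolynomial.eval x (p i)

/-- Length of the solution curve of the PIVP `y' = p(y)` on `[0, t]`
(the sup norm of the derivative is integrated). -/
def pLen {d : ℕ} (p : Fin d → MvPolynomial (Fin d) ℝ) (y : ℝ → Fin d → ℝ) (t : ℝ) : ℝ :=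
  ∫ s in (0:ℝ)..t, ‖pEval p (y s)‖

/-- `Ω : ℝ₊² → ℝ₊` is a polynomial function. -/
def IsPolyFun2 (Ω : ℝ → ℝ → ℝ) : Prop :=
  (∃ P : MvPolynomial (Fin 2) ℝ, ∀ a b : ℝ, Ω a b = MvPolynomial.eval ![a, b] P) ∧
  ∀ a b : ℝ, 0 ≤ a → 0 ≤ b → 0 ≤ Ω a b

/-- The class `AP` of polynomial-length computable partial functions `f :⊆ ℝⁿ → ℝᵐ`
(`dom` is the domain of `f`). -/
def AP {n m : ℕ} (dom : Set (Fin n → ℝ)) (f : (Fin n → ℝ) → (Fin m → ℝ)) : Prop :=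
  ∃ (d : ℕ) (hd : m ≤ d) (p : Fin d → MvPolynomial (Fin d) ℝ)
    (q : Fin d → MvPolynomial (Fin n) ℝ) (Ω : ℝ → ℝ → ℝ),
    IsPolyFun2 Ω ∧
    ∀ x ∈ dom, ∃ y : ℝ → Fin d → ℝ,
      (y 0 = fun i => MvPolynomial.eval x (q i)) ∧
      (∀ t : ℝ, 0 ≤ t → HasDerivAt y (pEval p (y t)) t) ∧
      (∀ t : ℝ, 0 ≤ t → ∀ μ : ℝ, 0 ≤ μ → Ω ‖x‖ μ ≤ pLen p y t →
        ‖(fun i : Fin m => y t (Fin.castLE hd i)) - f x‖ ≤ Real.exp (-μ)) ∧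
      (∀ t : ℝ, 0 ≤ t → t ≤ pLen p y t)

/-- `Υ : ℝ₊³ → ℝ₊` is a polynomial function. -/
def IsPolyFun3 (Υ : ℝ → ℝ → ℝ → ℝ) : Prop :=
  (∃ P : MvPolynomial (Fin 3) ℝ, ∀ a b c : ℝ, Υ a b c = MvPolynomial.eval ![a, b, c] P) ∧
  ∀ a b c : ℝ, 0 ≤ a → 0 ≤ b → 0 ≤ c → 0 ≤ Υ a b c

/-- The class `AWP` of weakly computable partial functions `f :⊆ ℝⁿ → ℝᵐ`. -/
def AWP {n m : ℕ} (dom : Set (Fin n → ℝ)) (f : (Fin n → ℝ) → (Fin m → ℝ)) : Prop :=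
  ∃ (Ω : ℝ → ℝ → ℝ) (Υ : ℝ → ℝ → ℝ → ℝ), IsPolyFun2 Ω ∧ IsPolyFun3 Υ ∧
  ∃ (d : ℕ) (hd : m ≤ d) (p : Fin d → MvPolynomial (Fin d) ℝ)
    (q : Fin d → MvPolynomial (Fin (n + 1)) ℝ),
    ∀ x ∈ dom, ∀ μ : ℝ, 0 ≤ μ → ∃ y : ℝ → Fin d → ℝ,
      (y 0 = fun i => MvPolynomial.eval (Fin.snoc x μ) (q i)) ∧
      (∀ t : ℝ, 0 ≤ t → HasDerivAt y (pEval p (y t)) t) ∧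
      (∀ t : ℝ, 0 ≤ t → Ω ‖x‖ μ ≤ t →
        ‖(fun i : Fin m => y t (Fin.castLE hd i)) - f x‖ ≤ Real.exp (-μ)) ∧
      (∀ t : ℝ, 0 ≤ t → ‖y t‖ ≤ Υ ‖x‖ μ t)

/-!
Solutions of `AP` systems may have unbounded speed, so they are slowed down by a time change `τ`:
let `a` be the derivative of `1 + ∑ i, p i ^ 2` along `y' = p(y)`, set `H u = 1 + ∫₀ᵘ (1 + a(y)²)`
and `τ' = g = 1 / H(τ)`. Up to the initial value of `1 + ∑ i, p i ^ 2`, `H` dominates the speed, so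
that `y ∘ τ` grows at most linearly in time. As long as the length of `y` up to `τ t` stays below
some `L`, so does `τ t`, and `y` and `H` are polynomially bounded there; hence so is `t`, which is
the integral of `H` up to `τ t`. So the length exceeds `L` after a polynomial time. Since
`g' = -(1 + a²) g³` and `g 0 = 1`, the pair `(y ∘ τ, g)` solves a polynomial system.

Conversely, an `AWP` system for a fixed precision is simulated again and again, in cycles of length
`2π` and with a precision `μ` that grows with the time `t`. In a cycle the simulated state is first
drawn to `q(x, μ)`, then driven by `p` for a long simulated time; finally the output is drawn to the
readout of the state, and `μ` to `t`. The phases are gated by logistic functions of a polynomial in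
`t` times a shifted cosine, and these gates satisfy polynomial differential equations.
The variable `t`, with `t' = 1`, makes the length of the curve at least `t`; a polynomial bound on
the variables makes it at most polynomial in `t`.
-/

open Set Filter MeasureTheory
open scoped NNReal Topology

section Relaxation

variable {E : Type*} [NormedAddCommGroup E]

/-- `v` is Lipschitz and bounded in the space variable, locally uniformly in time. -/
structure IsTameField (v : ℝ → E → E) : Prop where
  continuous_left : ∀ u : ℝ → E, Continuous u → Continuous fun t => v t (u t)
  lipschitz : ∀ T : ℝ, ∃ K : ℝ≥0, ∀ t ∈ Icc (-T) T, LipschitzWith K (v t)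
  bounded : ∀ T : ℝ, ∃ C : ℝ≥0, ∀ t ∈ Icc (-T) T, ∀ u, ‖v t u‖ ≤ C

theorem isTameField_zero : IsTameField fun (_ : ℝ) (_ : E) => (0 : E) :=
  ⟨fun _ _ => continuous_const, fun _ => ⟨0, fun _ _ => LipschitzWith.const 0⟩,
    fun _ => ⟨0, fun _ _ _ => by simp⟩⟩

variable [NormedSpace ℝ E] {v : ℝ → E → E}

theorem IsTameField.exists_hasDerivAt_Ioo [CompleteSpace E] (hv : IsTameField v) (y₀ : E) {T : ℝ}
    (hT : 0 ≤ T) :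
    ∃ y : ℝ → E, y 0 = y₀ ∧ ∀ t ∈ Ioo (-T) T, HasDerivAt y (v t (y t)) t := by
  obtain ⟨K, hK⟩ := hv.lipschitz T
  obtain ⟨C, hC⟩ := hv.bounded T
  have h0 : (0 : ℝ) ∈ Icc (-T) T := ⟨by linarith, hT⟩
  have hp : IsPicardLindelof v (⟨0, h0⟩ : Icc (-T) T) y₀ (C * T.toNNReal) 0 C K :=
    { lipschitzOnWith := fun t ht => (hK t ht).lipschitzOnWith
      continuousOn := fun u _ => (hv.continuous_left _ continuous_const).continuousOn
      norm_le := fun t ht u _ => hC t ht u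
      mul_max_le := by simp [hT] }
  obtain ⟨y, hy0, hy⟩ := hp.exists_eq_forall_mem_Icc_hasDerivWithinAt₀
  exact ⟨y, hy0, fun t ht => (hy t (Ioo_subset_Icc_self ht)).hasDerivAt (Icc_mem_nhds ht.1 ht.2)⟩

theorem IsTameField.eqOn_Ioo (hv : IsTameField v) {y z : ℝ → E} {T : ℝ} (hyz : y 0 = z 0)
    (hy : ∀ t ∈ Ioo (-T) T, HasDerivAt y (v t (y t)) t)
    (hz : ∀ t ∈ Ioo (-T) T, HasDerivAt z (v t (z t)) t) : EqOn y z (Ioo (-T) T) := by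
  intro t ht
  obtain ⟨K, hK⟩ := hv.lipschitz T
  have hT : 0 < T := by linarith [ht.1, ht.2]
  exact ODE_solution_unique_of_mem_Ioo (s := fun _ => univ) (t₀ := 0)
    (fun t ht => (hK t (Ioo_subset_Icc_self ht)).lipschitzOnWith) ⟨by linarith, hT⟩
    (fun t ht => ⟨hy t ht, trivial⟩) (fun t ht => ⟨hz t ht, trivial⟩) hyz ht

theorem IsTameField.exists_hasDerivAt [CompleteSpace E] (hv : IsTameField v) (y₀ : E) :
    ∃ y : ℝ → E, y 0 = y₀ ∧ ∀ t, HasDerivAt y (v t (y t)) t := by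
  choose Y hY0 hY using fun N : ℕ =>
    hv.exists_hasDerivAt_Ioo y₀ (T := (N : ℝ) + 1) (by positivity)
  have hYY {N M : ℕ} (hNM : N ≤ M) : EqOn (Y N) (Y M) (Ioo (-(N + 1 : ℝ)) (N + 1)) := by
    have hNM' : (N : ℝ) ≤ M := by exact_mod_cast hNM
    exact hv.eqOn_Ioo (by rw [hY0, hY0]) (hY N)
      fun t ht => hY M t ⟨by linarith [ht.1], by linarith [ht.2]⟩
  have mem_Ioo (t : ℝ) : t ∈ Ioo (-(⌈|t|⌉₊ + 1 : ℝ)) (⌈|t|⌉₊ + 1) :=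
    abs_lt.1 (by linarith [Nat.le_ceil |t|])
  refine ⟨fun t => Y ⌈|t|⌉₊ t, by simp [hY0], fun t => ?_⟩
  set N := ⌈|t|⌉₊ + 1 with hN
  have hN' : (N : ℝ) = ⌈|t|⌉₊ + 1 := by simp [hN]
  have hlocal : (fun s => Y ⌈|s|⌉₊ s) =ᶠ[𝓝 t] Y N := by
    filter_upwards [isOpen_Ioo.mem_nhds (mem_Ioo t)] with s hs
    refine hYY (Nat.ceil_le.2 ?_) (mem_Ioo s)
    rw [hN']
    exact (abs_lt.2 hs).le
  have ht : t ∈ Ioo (-(N + 1 : ℝ)) (N + 1) := by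
    rw [hN']
    exact ⟨by linarith [(mem_Ioo t).1], by linarith [(mem_Ioo t).2]⟩
  exact ((hY N t ht).congr_of_eventuallyEq hlocal).congr_deriv (by rw [← hlocal.eq_of_nhds])

theorem exists_hasDerivAt_add_smul_sub [CompleteSpace E] (hv : IsTameField v) {β : ℝ → ℝ}
    (hβ : Continuous β) {Q : ℝ → E} (hQ : Continuous Q) (y₀ : E) :
    ∃ y : ℝ → E, y 0 = y₀ ∧ ∀ t, HasDerivAt y (v t (y t) + β t • (Q t - y t)) t := by
  set B : ℝ → ℝ := fun t => ∫ s in 0..t, β s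
  have hB (t : ℝ) : HasDerivAt B (β t) t := (hβ.integral_hasStrictDerivAt 0 t).hasDerivAt
  have hBc : Continuous B := continuous_iff_continuousAt.2 fun t => (hB t).continuousAt
  have bdd {h : ℝ → ℝ} (hh : Continuous h) (T : ℝ) : ∃ C : ℝ≥0, ∀ t ∈ Icc (-T) T, h t ≤ C := by
    obtain ⟨C, hC⟩ := (isCompact_Icc (a := -T) (b := T)).exists_bound_of_continuousOn
      hh.continuousOn
    exact ⟨C.toNNReal, fun t ht => (le_abs_self _).trans ((hC t ht).trans C.le_coe_toNNReal)⟩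
  have hw : IsTameField fun t u => Real.exp (B t) • (v t (Real.exp (-B t) • u) + β t • Q t) :=
    { continuous_left := fun u hu => by
        have := hv.continuous_left (fun t => Real.exp (-B t) • u t) (by fun_prop)
        exact (Real.continuous_exp.comp hBc).smul (this.add (hβ.smul hQ))
      lipschitz := fun T => by
        obtain ⟨K, hK⟩ := hv.lipschitz T
        refine ⟨K, fun t ht => LipschitzWith.of_dist_le_mul fun a b => ?_⟩
        have h := (hK t ht).dist_le_mul (Real.exp (-B t) • a) (Real.exp (-B t) • b)
        simp only [dist_smul₀, Real.norm_eq_abs, Real.abs_exp, dist_add_right] at h ⊢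
        calc _ ≤ Real.exp (B t) * (K * (Real.exp (-B t) * dist a b)) := by gcongr
          _ = (Real.exp (B t) * Real.exp (-B t)) * (K * dist a b) := by ring
          _ = _ := by rw [← Real.exp_add, add_neg_cancel, Real.exp_zero, one_mul]
      bounded := fun T => by
        obtain ⟨C, hC⟩ := hv.bounded T
        obtain ⟨C₁, hC₁⟩ := bdd (h := fun t => Real.exp (B t)) (by fun_prop) T
        obtain ⟨C₂, hC₂⟩ := bdd (h := fun t => ‖β t • Q t‖) (by fun_prop) T
        refine ⟨C₁ * (C + C₂), fun t ht u => ?_⟩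
        rw [norm_smul, Real.norm_eq_abs, Real.abs_exp, NNReal.coe_mul, NNReal.coe_add]
        exact mul_le_mul (hC₁ t ht) ((norm_add_le _ _).trans (add_le_add (hC t ht _) (hC₂ t ht)))
          (norm_nonneg _) C₁.2 }
  obtain ⟨w, hw0, hw'⟩ := hw.exists_hasDerivAt y₀
  refine ⟨fun t => Real.exp (-B t) • w t, by simp [B, hw0], fun t => ?_⟩
  refine ((hB t).neg.exp.smul (hw' t)).congr_deriv ?_
  rw [smul_smul, Pi.neg_apply, ← Real.exp_add, neg_add_cancel, Real.exp_zero, one_smul]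
  module

/-- On `[t₀, t₁]` the curve `u` is attracted to `c` at rate `β`, up to errors: it solves
`u' = e + β (g - u)` with `g` within `η` of `c` and `e` of size at most `ε`. -/
structure RelaxesOn (u : ℝ → E) (β : ℝ → ℝ) (c : E) (η ε t₀ t₁ : ℝ) : Prop where
  continuous_rate : Continuous β
  rate_nonneg : ∀ t ∈ Icc t₀ t₁, 0 ≤ β t
  deriv : ∀ t ∈ Icc t₀ t₁, ∃ g e : E,
    ‖g - c‖ ≤ η ∧ ‖e‖ ≤ ε ∧ HasDerivAt u (e + β t • (g - u t)) t

namespace RelaxesOn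

variable {u : ℝ → E} {β : ℝ → ℝ} {c : E} {η ε t₀ t₁ t : ℝ}

theorem exp_integral_mul_norm_sub_le (h : RelaxesOn u β c η ε t₀ t₁) (ht : t ∈ Icc t₀ t₁) :
    Real.exp (∫ s in t₀..t, β s) * ‖u t - c‖ ≤ ‖u t₀ - c‖
      + (Real.exp (∫ s in t₀..t, β s) - 1) * η + Real.exp (∫ s in t₀..t, β s) * (ε * (t - t₀)) := by
  set B : ℝ → ℝ := fun t => ∫ s in t₀..t, β s
  have hB (t : ℝ) : HasDerivAt B (β t) t :=
    (h.continuous_rate.integral_hasStrictDerivAt t₀ t).hasDerivAt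
  have hB0 : B t₀ = 0 := by simp [B]
  choose! g e hg he hu using h.deriv
  have hw (s : ℝ) (hs : s ∈ Icc t₀ t₁) : HasDerivAt (fun s => Real.exp (B s) • (u s - c))
      (Real.exp (B s) • (e s + β s • (g s - c))) s :=
    ((hB s).exp.smul ((hu s hs).sub_const c)).congr_deriv (by module)
  have hW (s : ℝ) : HasDerivAt
      (fun s => ‖u t₀ - c‖ + (Real.exp (B s) - 1) * η + Real.exp (B s) * (ε * (s - t₀)))
      (Real.exp (B s) * (ε + β s * η) + Real.exp (B s) * β s * (ε * (s - t₀))) s :=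
    (((((hB s).exp.sub_const 1).mul_const η).const_add ‖u t₀ - c‖).add
      ((hB s).exp.mul (((hasDerivAt_id s).sub_const t₀).const_mul ε))).congr_deriv
      (by simp only [id]; ring)
  have hwW (s : ℝ) (hs : s ∈ Ico t₀ t₁) : ‖Real.exp (B s) • (e s + β s • (g s - c))‖ ≤
      Real.exp (B s) * (ε + β s * η) + Real.exp (B s) * β s * (ε * (s - t₀)) := by
    have hs' := Ico_subset_Icc_self hs
    have hβ := h.rate_nonneg s hs'
    have hε : 0 ≤ ε := (norm_nonneg _).trans (he s hs')
    have hst : 0 ≤ s - t₀ := sub_nonneg.2 hs.1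
    have hforce : ‖e s + β s • (g s - c)‖ ≤ ε + β s * η := by
      refine (norm_add_le _ _).trans (add_le_add (he s hs') ?_)
      rw [norm_smul, Real.norm_of_nonneg hβ]
      exact mul_le_mul_of_nonneg_left (hg s hs') hβ
    rw [norm_smul, Real.norm_eq_abs, Real.abs_exp]
    exact (mul_le_mul_of_nonneg_left hforce (Real.exp_pos _).le).trans
      (le_add_of_nonneg_right (by positivity))
  have := image_norm_le_of_norm_deriv_right_le_deriv_boundary
    (fun s hs => (hw s hs).continuousAt.continuousWithinAt)
    (fun s hs => (hw s (Ico_subset_Icc_self hs)).hasDerivWithinAt) (by simp [hB0]) hW hwW ht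
  simpa only [norm_smul, Real.norm_eq_abs, Real.abs_exp] using this

theorem norm_sub_le (h : RelaxesOn u β c η ε t₀ t₁) (ht : t ∈ Icc t₀ t₁) :
    ‖u t - c‖ ≤ Real.exp (-∫ s in t₀..t, β s) * ‖u t₀ - c‖
      + (1 - Real.exp (-∫ s in t₀..t, β s)) * η + ε * (t - t₀) := by
  have hmul := h.exp_integral_mul_norm_sub_le ht
  set B := ∫ s in t₀..t, β s
  have hexp : Real.exp (-B) * Real.exp B = 1 := by
    rw [← Real.exp_add, neg_add_cancel, Real.exp_zero]
  calc ‖u t - c‖ = Real.exp (-B) * (Real.exp B * ‖u t - c‖) := by rw [← mul_assoc, hexp, one_mul]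
    _ ≤ Real.exp (-B) * (‖u t₀ - c‖ + (Real.exp B - 1) * η + Real.exp B * (ε * (t - t₀))) := by
      gcongr
    _ = Real.exp (-B) * ‖u t₀ - c‖ + (Real.exp (-B) * Real.exp B - Real.exp (-B)) * η
        + Real.exp (-B) * Real.exp B * (ε * (t - t₀)) := by ring
    _ = _ := by rw [hexp, one_mul]

theorem error_nonneg (h : RelaxesOn u β c η ε t₀ t₁) (ht : t ∈ Icc t₀ t₁) : 0 ≤ η := by
  obtain ⟨g, -, hg, -⟩ := h.deriv t ht
  exact (norm_nonneg _).trans hg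

theorem integral_rate_nonneg (h : RelaxesOn u β c η ε t₀ t₁) (ht : t ∈ Icc t₀ t₁) :
    0 ≤ ∫ s in t₀..t, β s :=
  intervalIntegral.integral_nonneg ht.1 fun s hs => h.rate_nonneg s ⟨hs.1, hs.2.trans ht.2⟩

theorem norm_sub_le_exp (h : RelaxesOn u β c η ε t₀ t₁) (ht : t ∈ Icc t₀ t₁) {b : ℝ}
    (hb : b ≤ ∫ s in t₀..t, β s) :
    ‖u t - c‖ ≤ Real.exp (-b) * ‖u t₀ - c‖ + η + ε * (t - t₀) := by
  have hη := h.error_nonneg ht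
  refine (h.norm_sub_le ht).trans ?_
  gcongr
  exact mul_le_of_le_one_left hη (by linarith [Real.exp_pos (-∫ s in t₀..t, β s)])

theorem norm_sub_le_add (h : RelaxesOn u β c η ε t₀ t₁) (ht : t ∈ Icc t₀ t₁) :
    ‖u t - c‖ ≤ ‖u t₀ - c‖ + η + ε * (t - t₀) := by
  simpa using h.norm_sub_le_exp ht (h.integral_rate_nonneg ht)

theorem norm_sub_le_of_le (h : RelaxesOn u β c η 0 t₀ t₁) (ht : t ∈ Icc t₀ t₁)
    (h₀ : ‖u t₀ - c‖ ≤ η) : ‖u t - c‖ ≤ η := by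
  have hmul := mul_le_mul_of_nonneg_left h₀ (Real.exp_pos (-∫ s in t₀..t, β s)).le
  linarith [h.norm_sub_le ht]

theorem norm_sub_le_add_integral_mul (h : RelaxesOn u β c η ε t₀ t₁) (ht : t ∈ Icc t₀ t₁) :
    ‖u t - c‖ ≤ ‖u t₀ - c‖ + (∫ s in t₀..t, β s) * η + ε * (t - t₀) := by
  have hexp := Real.add_one_le_exp (-∫ s in t₀..t, β s)
  have hexp_one : Real.exp (-∫ s in t₀..t, β s) ≤ 1 :=
    Real.exp_le_one_iff.2 (neg_nonpos.2 (h.integral_rate_nonneg ht))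
  refine (h.norm_sub_le ht).trans ?_
  gcongr
  · exact mul_le_of_le_one_left (norm_nonneg _) hexp_one
  · exact h.error_nonneg ht
  · linarith

end RelaxesOn

end Relaxation

theorem gronwallBound_le {δ K ε x : ℝ} (hK : 0 ≤ K) (hε : 0 ≤ ε) :
    gronwallBound δ K ε x ≤ (δ + ε * x) * Real.exp (K * x) := by
  rcases hK.eq_or_lt with rfl | hK
  · simp [gronwallBound_K0]
  · rw [gronwallBound_of_K_ne_0 hK.ne', add_mul]
    refine add_le_add_right ?_ _
    have hexp : Real.exp (K * x) - 1 ≤ K * x * Real.exp (K * x) := by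
      have := mul_le_mul_of_nonneg_left (Real.one_sub_le_exp_neg (K * x)) (Real.exp_pos (K * x)).le
      rw [← Real.exp_add, add_neg_cancel, Real.exp_zero] at this
      linarith
    calc ε / K * (Real.exp (K * x) - 1) ≤ ε / K * (K * x * Real.exp (K * x)) := by gcongr
      _ = ε * x * Real.exp (K * x) := by field_simp

theorem norm_sub_le_of_perturbed_field {E : Type*} [NormedAddCommGroup E] [NormedSpace ℝ E]
    {α β : ℝ → ℝ} {G : ℝ → E → E} {Q y z : ℝ → E} {t₁ t₂ Λ κ K M : ℝ}
    (hK : 0 ≤ K) (hα : ∀ t ∈ Icc t₁ t₂, α t ∈ Icc 0 Λ) (hβ : ∀ t ∈ Icc t₁ t₂, β t ∈ Icc 0 κ)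
    (hG : ∀ t ∈ Icc t₁ t₂, ∀ u v, ‖G t u - G t v‖ ≤ K * ‖u - v‖)
    (hQ : ∀ t ∈ Icc t₁ t₂, ‖Q t‖ ≤ M) (hzM : ∀ t ∈ Icc t₁ t₂, ‖z t‖ ≤ M)
    (hy : ∀ t ∈ Icc t₁ t₂, HasDerivAt y (α t • G t (y t) + β t • (Q t - y t)) t)
    (hz : ∀ t ∈ Icc t₁ t₂, HasDerivAt z (α t • G t (z t)) t) {t : ℝ} (ht : t ∈ Icc t₁ t₂) :
    ‖y t - z t‖ ≤ (‖y t₁ - z t₁‖ + κ * (2 * M) * (t - t₁)) * Real.exp ((Λ * K + κ) * (t - t₁)) := by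
  have hΛ : 0 ≤ Λ := (hα t ht).1.trans (hα t ht).2
  have hκ : 0 ≤ κ := (hβ t ht).1.trans (hβ t ht).2
  have hM : 0 ≤ M := (norm_nonneg _).trans (hQ t ht)
  have hL : 0 ≤ Λ * K + κ := by positivity
  have hlip (s : ℝ) (hs : s ∈ Icc t₁ t₂) : LipschitzWith (Λ * K + κ).toNNReal
      fun u => α s • G s u + β s • (Q s - u) := by
    refine LipschitzWith.of_dist_le_mul fun u v => ?_
    have hsplit : α s • G s u + β s • (Q s - u) - (α s • G s v + β s • (Q s - v))
        = α s • (G s u - G s v) - β s • (u - v) := by module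
    rw [dist_eq_norm, dist_eq_norm, Real.coe_toNNReal _ hL, hsplit]
    refine (norm_sub_le _ _).trans ?_
    rw [norm_smul, norm_smul, Real.norm_of_nonneg (hα s hs).1, Real.norm_of_nonneg (hβ s hs).1,
      add_mul, mul_assoc]
    exact add_le_add (mul_le_mul (hα s hs).2 (hG s hs u v) (norm_nonneg _) hΛ)
      (mul_le_mul_of_nonneg_right (hβ s hs).2 (norm_nonneg _))
  have hdefect (s : ℝ) (hs : s ∈ Icc t₁ t₂) :
      dist (α s • G s (z s)) (α s • G s (z s) + β s • (Q s - z s)) ≤ κ * (2 * M) := by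
    rw [dist_self_add_right, norm_smul, Real.norm_of_nonneg (hβ s hs).1]
    refine mul_le_mul (hβ s hs).2 ?_ (norm_nonneg _) hκ
    linarith [norm_sub_le (Q s) (z s), hQ s hs, hzM s hs]
  have key := dist_le_of_approx_trajectories_ODE_of_mem (s := fun _ => univ)
    (v := fun s u => α s • G s u + β s • (Q s - u))
    (fun s hs => (hlip s (Ico_subset_Icc_self hs)).lipschitzOnWith)
    (fun s hs => (hy s hs).continuousAt.continuousWithinAt)
    (fun s hs => (hy s (Ico_subset_Icc_self hs)).hasDerivWithinAt) (fun _ _ => (dist_self _).le)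
    (fun _ _ => mem_univ _)
    (fun s hs => (hz s hs).continuousAt.continuousWithinAt)
    (fun s hs => (hz s (Ico_subset_Icc_self hs)).hasDerivWithinAt)
    (fun s hs => hdefect s (Ico_subset_Icc_self hs)) (fun _ _ => mem_univ _)
    (dist_eq_norm _ _).le t ht
  rw [dist_eq_norm, Real.coe_toNNReal _ hL, zero_add] at key
  exact key.trans (gronwallBound_le hL (by positivity))

section PolynomialGrowth

open MvPolynomial

variable {σ τ : Type*}

/-- Evaluation of a family of polynomials indexed by an arbitrary type; for `Fin`-indexed families
this is `pEval`. -/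
def evalVec (p : τ → MvPolynomial σ ℝ) (x : σ → ℝ) : τ → ℝ :=
  fun i => eval x (p i)

theorem continuous_evalVec (p : τ → MvPolynomial σ ℝ) : Continuous (evalVec p) :=
  continuous_pi fun i => continuous_eval (p i)

theorem evalVec_bind₁ {ρ : Type*} (p : τ → MvPolynomial σ ℝ) (q : σ → MvPolynomial ρ ℝ)
    (x : ρ → ℝ) : evalVec (fun i => bind₁ q (p i)) x = evalVec p (evalVec q x) := by
  ext i
  exact eval₂Hom_bind₁ _ _ _ _

variable [Fintype σ]

theorem eventually_abs_eval_le_pow (P : MvPolynomial σ ℝ) :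
    ∀ᶠ b : ℕ in atTop, ∀ S : ℝ, 2 ≤ S → ∀ v : σ → ℝ, ‖v‖ ≤ S → |eval v P| ≤ S ^ b := by
  induction P using MvPolynomial.induction_on with
  | C r =>
    filter_upwards [(tendsto_pow_atTop_atTop_of_one_lt one_lt_two).eventually_ge_atTop |r|]
      with b hb S hS v _
    rw [eval_C]
    exact hb.trans (pow_le_pow_left₀ zero_le_two hS b)
  | add P Q hP hQ =>
    filter_upwards [(tendsto_sub_atTop_nat 1).eventually (hP.and hQ), eventually_ge_atTop 1]
      with b hPQ hb S hS v hv
    obtain ⟨b, rfl⟩ := Nat.exists_eq_add_of_le' hb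
    rw [Nat.add_sub_cancel] at hPQ
    calc |eval v (P + Q)| ≤ |eval v P| + |eval v Q| := by rw [map_add]; exact abs_add_le _ _
      _ ≤ S ^ b + S ^ b := add_le_add (hPQ.1 S hS v hv) (hPQ.2 S hS v hv)
      _ = S ^ b * 2 := by ring
      _ ≤ S ^ b * S := by gcongr
      _ = S ^ (b + 1) := by ring
  | mul_X P i hP =>
    filter_upwards [(tendsto_sub_atTop_nat 1).eventually hP, eventually_ge_atTop 1]
      with b hP hb S hS v hv
    obtain ⟨b, rfl⟩ := Nat.exists_eq_add_of_le' hb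
    rw [Nat.add_sub_cancel] at hP
    rw [map_mul, eval_X, abs_mul, pow_succ]
    exact mul_le_mul (hP S hS v hv) ((norm_le_pi_norm v i).trans hv) (abs_nonneg _) (by positivity)

theorem eventually_abs_eval_sub_eval_le_pow_mul (P : MvPolynomial σ ℝ) :
    ∀ᶠ b : ℕ in atTop, ∀ S : ℝ, 2 ≤ S → ∀ v w : σ → ℝ, ‖v‖ ≤ S → ‖w‖ ≤ S →
      |eval v P - eval w P| ≤ S ^ b * ‖v - w‖ := by
  induction P using MvPolynomial.induction_on with
  | C r =>
    refine .of_forall fun b S hS v w _ _ => ?_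
    rw [eval_C, eval_C, sub_self, abs_zero]
    positivity
  | add P Q hP hQ =>
    filter_upwards [(tendsto_sub_atTop_nat 1).eventually (hP.and hQ), eventually_ge_atTop 1]
      with b hPQ hb S hS v w hv hw
    obtain ⟨b, rfl⟩ := Nat.exists_eq_add_of_le' hb
    rw [Nat.add_sub_cancel] at hPQ
    calc |eval v (P + Q) - eval w (P + Q)|
        ≤ |eval v P - eval w P| + |eval v Q - eval w Q| := by
          rw [map_add, map_add, add_sub_add_comm]; exact abs_add_le _ _
      _ ≤ S ^ b * ‖v - w‖ + S ^ b * ‖v - w‖ :=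
          add_le_add (hPQ.1 S hS v w hv hw) (hPQ.2 S hS v w hv hw)
      _ = S ^ b * ‖v - w‖ * 2 := by ring
      _ ≤ S ^ b * ‖v - w‖ * S := by gcongr
      _ = S ^ (b + 1) * ‖v - w‖ := by ring
  | mul_X P i hP =>
    filter_upwards [(tendsto_sub_atTop_nat 2).eventually (hP.and (eventually_abs_eval_le_pow P)),
      eventually_ge_atTop 2] with b hP hb S hS v w hv hw
    obtain ⟨b, rfl⟩ := Nat.exists_eq_add_of_le' hb
    rw [Nat.add_sub_cancel] at hP
    have hvi : |v i| ≤ S := (norm_le_pi_norm v i).trans hv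
    have hvwi : |v i - w i| ≤ ‖v - w‖ := norm_le_pi_norm (v - w) i
    calc |eval v (P * X i) - eval w (P * X i)|
        = |(eval v P - eval w P) * v i + eval w P * (v i - w i)| := by
          rw [map_mul, map_mul, eval_X, eval_X]; ring_nf
      _ ≤ |eval v P - eval w P| * |v i| + |eval w P| * |v i - w i| := by
          rw [← abs_mul, ← abs_mul]; exact abs_add_le _ _
      _ ≤ S ^ b * ‖v - w‖ * S + S ^ b * ‖v - w‖ := by
          gcongr
          · exact hP.1 S hS v w hv hw
          · exact hP.2 S hS w hw
      _ = S ^ b * ‖v - w‖ * (S + 1) := by ring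
      _ ≤ S ^ b * ‖v - w‖ * S ^ 2 := by gcongr; nlinarith
      _ = S ^ (b + 2) * ‖v - w‖ := by ring

variable [Fintype τ]

theorem eventually_norm_evalVec_le_pow (p : τ → MvPolynomial σ ℝ) :
    ∀ᶠ b : ℕ in atTop, ∀ S : ℝ, 2 ≤ S → ∀ v : σ → ℝ, ‖v‖ ≤ S → ‖evalVec p v‖ ≤ S ^ b := by
  filter_upwards [eventually_all.2 fun i => eventually_abs_eval_le_pow (p i)] with b hb S hS v hv
  exact (pi_norm_le_iff_of_nonneg (by positivity)).2 fun i => hb i S hS v hv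

theorem eventually_norm_evalVec_sub_le_pow_mul (p : τ → MvPolynomial σ ℝ) :
    ∀ᶠ b : ℕ in atTop, ∀ S : ℝ, 2 ≤ S → ∀ v w : σ → ℝ, ‖v‖ ≤ S → ‖w‖ ≤ S →
      ‖evalVec p v - evalVec p w‖ ≤ S ^ b * ‖v - w‖ := by
  filter_upwards [eventually_all.2 fun i => eventually_abs_eval_sub_eval_le_pow_mul (p i)]
    with b hb S hS v w hv hw
  exact (pi_norm_le_iff_of_nonneg (by positivity)).2 fun i => hb i S hS v w hv hw

theorem IsPolyFun2.eventually_le_pow {Ω : ℝ → ℝ → ℝ} (hΩ : IsPolyFun2 Ω) :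
    ∀ᶠ b : ℕ in atTop, ∀ S : ℝ, 2 ≤ S → ∀ u v : ℝ, |u| ≤ S → |v| ≤ S → Ω u v ≤ S ^ b := by
  obtain ⟨⟨P, hP⟩, -⟩ := hΩ
  filter_upwards [eventually_abs_eval_le_pow P] with b hb S hS u v hu hv
  rw [hP]
  refine (le_abs_self _).trans (hb S hS _ ((pi_norm_le_iff_of_nonneg (by positivity)).2 ?_))
  simp [Fin.forall_fin_two, hu, hv]

theorem IsPolyFun3.eventually_le_pow {Υ : ℝ → ℝ → ℝ → ℝ} (hΥ : IsPolyFun3 Υ) :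
    ∀ᶠ b : ℕ in atTop, ∀ S : ℝ, 2 ≤ S → ∀ u v w : ℝ, |u| ≤ S → |v| ≤ S → |w| ≤ S →
      Υ u v w ≤ S ^ b := by
  obtain ⟨⟨P, hP⟩, -⟩ := hΥ
  filter_upwards [eventually_abs_eval_le_pow P] with b hb S hS u v w hu hv hw
  rw [hP]
  refine (le_abs_self _).trans (hb S hS _ ((pi_norm_le_iff_of_nonneg (by positivity)).2 ?_))
  simp [Fin.forall_fin_succ, hu, hv, hw]

end PolynomialGrowth

section Reindexing

open MvPolynomial

theorem exists_equiv_fin_castLE {m : ℕ} {σ : Type*} [Finite σ] (o : Fin m ↪ σ) :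
    ∃ (d : ℕ) (hd : m ≤ d) (e : σ ≃ Fin d), ∀ i, e (o i) = Fin.castLE hd i := by
  classical
  have := Fintype.ofFinite σ
  let k := Fintype.card ↥(range o)ᶜ
  let e : σ ≃ Fin (m + k) := (Equiv.Set.sumCompl (range o)).symm.trans
    (((Equiv.ofInjective o o.injective).symm.sumCongr (Fintype.equivFin _)).trans finSumFinEquiv)
  refine ⟨m + k, Nat.le_add_right m k, e, fun i => ?_⟩
  have hrange : (Equiv.Set.sumCompl (range o)).symm (o i) = Sum.inl ⟨o i, mem_range_self i⟩ :=
    Equiv.Set.sumCompl_symm_apply_of_mem _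
  simp only [e, Equiv.trans_apply, hrange, Equiv.sumCongr_apply, Sum.map_inl,
    Equiv.ofInjective_symm_apply, finSumFinEquiv_apply_left]
  rfl

variable {σ : Type*} {d : ℕ} (e : σ ≃ Fin d)

theorem pEval_rename_equiv (p : σ → MvPolynomial σ ℝ) (y : σ → ℝ) :
    pEval (fun i => rename e (p (e.symm i))) (y ∘ e.symm) = evalVec p y ∘ e.symm := by
  ext i
  simp only [pEval, evalVec, eval_rename, Function.comp_assoc, Equiv.symm_comp_self,
    Function.comp_id, Function.comp_apply]

theorem hasDerivAt_pEval_comp_equiv [Finite σ] {p : σ → MvPolynomial σ ℝ} {y : ℝ → σ → ℝ} {t : ℝ}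
    (hy : HasDerivAt y (evalVec p (y t)) t) :
    HasDerivAt (fun s => y s ∘ e.symm)
      (pEval (fun i => rename e (p (e.symm i))) (y t ∘ e.symm)) t := by
  have := Fintype.ofFinite σ
  rw [pEval_rename_equiv]
  exact hasDerivAt_pi.2 fun i => hasDerivAt_pi.1 hy (e.symm i)

theorem pLen_comp_equiv [Fintype σ] (p : σ → MvPolynomial σ ℝ) (y : ℝ → σ → ℝ) (t : ℝ) :
    pLen (fun i => rename e (p (e.symm i))) (fun s => y s ∘ e.symm) t =
      ∫ s in 0..t, ‖evalVec p (y s)‖ := by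
  simp only [pLen, pEval_rename_equiv, e.symm.surjective.pi_norm_comp]

theorem AP.of_fintype [Fintype σ] {n m : ℕ} {dom : Set (Fin n → ℝ)}
    {f : (Fin n → ℝ) → (Fin m → ℝ)} (o : Fin m ↪ σ) (p : σ → MvPolynomial σ ℝ)
    (q : σ → MvPolynomial (Fin n) ℝ) {Ω : ℝ → ℝ → ℝ} (hΩ : IsPolyFun2 Ω)
    (H : ∀ x ∈ dom, ∃ y : ℝ → σ → ℝ, y 0 = evalVec q x ∧
      (∀ t, 0 ≤ t → HasDerivAt y (evalVec p (y t)) t) ∧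
      (∀ t, 0 ≤ t → ∀ μ, 0 ≤ μ → Ω ‖x‖ μ ≤ ∫ s in 0..t, ‖evalVec p (y s)‖ →
        ‖(fun i => y t (o i)) - f x‖ ≤ Real.exp (-μ)) ∧
      ∀ t, 0 ≤ t → t ≤ ∫ s in 0..t, ‖evalVec p (y s)‖) : AP dom f := by
  obtain ⟨d, hd, e, he⟩ := exists_equiv_fin_castLE o
  refine ⟨d, hd, fun i => rename e (p (e.symm i)), q ∘ e.symm, Ω, hΩ, fun x hx => ?_⟩
  obtain ⟨y, hy0, hy, hout, hlen⟩ := H x hx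
  refine ⟨fun t => y t ∘ e.symm, funext fun i => congrFun hy0 (e.symm i),
    fun t ht => hasDerivAt_pEval_comp_equiv e (hy t ht), fun t ht μ hμ hle => ?_, fun t ht => ?_⟩
  · rw [pLen_comp_equiv] at hle
    simpa only [Function.comp_apply, ← he, Equiv.symm_apply_apply] using hout t ht μ hμ hle
  · rw [pLen_comp_equiv]
    exact hlen t ht

theorem AWP.of_fintype [Fintype σ] {n m : ℕ} {dom : Set (Fin n → ℝ)}
    {f : (Fin n → ℝ) → (Fin m → ℝ)} (o : Fin m ↪ σ) (p : σ → MvPolynomial σ ℝ)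
    (q : σ → MvPolynomial (Fin (n + 1)) ℝ) {Ω : ℝ → ℝ → ℝ} (hΩ : IsPolyFun2 Ω)
    {Υ : ℝ → ℝ → ℝ → ℝ} (hΥ : IsPolyFun3 Υ)
    (H : ∀ x ∈ dom, ∀ μ, 0 ≤ μ → ∃ y : ℝ → σ → ℝ, y 0 = evalVec q (Fin.snoc x μ) ∧
      (∀ t, 0 ≤ t → HasDerivAt y (evalVec p (y t)) t) ∧
      (∀ t, 0 ≤ t → Ω ‖x‖ μ ≤ t → ‖(fun i => y t (o i)) - f x‖ ≤ Real.exp (-μ)) ∧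
      ∀ t, 0 ≤ t → ‖y t‖ ≤ Υ ‖x‖ μ t) : AWP dom f := by
  obtain ⟨d, hd, e, he⟩ := exists_equiv_fin_castLE o
  refine ⟨Ω, Υ, hΩ, hΥ, d, hd, fun i => rename e (p (e.symm i)), q ∘ e.symm,
    fun x hx μ hμ => ?_⟩
  obtain ⟨y, hy0, hy, hout, hbound⟩ := H x hx μ hμ
  refine ⟨fun t => y t ∘ e.symm, funext fun i => congrFun hy0 (e.symm i),
    fun t ht => hasDerivAt_pEval_comp_equiv e (hy t ht), fun t ht hle => ?_, fun t ht => ?_⟩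
  · simpa only [Function.comp_apply, ← he, Equiv.symm_apply_apply] using hout t ht hle
  · rw [e.symm.surjective.pi_norm_comp]
    exact hbound t ht

end Reindexing

section CurveLength

open MvPolynomial

variable {d : ℕ} {p : Fin d → MvPolynomial (Fin d) ℝ} {y : ℝ → Fin d → ℝ}

theorem hasDerivAt_eval {σ : Type*} [Finite σ] {p : σ → MvPolynomial σ ℝ} {y : ℝ → σ → ℝ} {t : ℝ}
    (hy : HasDerivAt y (evalVec p (y t)) t) (P : MvPolynomial σ ℝ) :
    HasDerivAt (fun s => eval (y s) P) (eval (y t) (mkDerivation ℝ p P)) t := by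
  have := Fintype.ofFinite σ
  induction P using MvPolynomial.induction_on with
  | C r => simpa using hasDerivAt_const t r
  | add P Q hP hQ =>
    simp only [map_add]
    exact hP.add hQ
  | mul_X P i hP =>
    simp only [map_mul, eval_X, Derivation.leibniz, mkDerivation_X, smul_eq_mul, map_add]
    exact (hP.mul (hasDerivAt_pi.1 hy i)).congr_deriv (by rw [evalVec]; ring)

theorem continuousOn_eval (hy : ∀ t, 0 ≤ t → HasDerivAt y (pEval p (y t)) t)
    (P : MvPolynomial (Fin d) ℝ) : ContinuousOn (fun t => eval (y t) P) (Ici 0) :=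
  fun t ht => (hasDerivAt_eval (hy t ht) P).continuousAt.continuousWithinAt

theorem intervalIntegrable_evalVec {σ : Type*} [Fintype σ] {p : σ → MvPolynomial σ ℝ}
    {y : ℝ → σ → ℝ} {t : ℝ} (hy : ∀ t, 0 ≤ t → HasDerivAt y (evalVec p (y t)) t) (ht : 0 ≤ t) :
    IntervalIntegrable (fun s => evalVec p (y s)) volume 0 t := by
  refine ((continuous_evalVec p).comp_continuousOn fun s hs => ?_).intervalIntegrable
  rw [uIcc_of_le ht] at hs
  exact (hy s hs.1).continuousAt.continuousWithinAt

theorem norm_sub_le_pLen (hy : ∀ t, 0 ≤ t → HasDerivAt y (pEval p (y t)) t) {t : ℝ} (ht : 0 ≤ t) :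
    ‖y t - y 0‖ ≤ pLen p y t := by
  rw [← intervalIntegral.integral_eq_sub_of_hasDerivAt
    (fun s hs => hy s (by rw [uIcc_of_le ht] at hs; exact hs.1)) (intervalIntegrable_evalVec hy ht)]
  exact intervalIntegral.norm_integral_le_integral_norm ht

theorem pLen_le_pLen (hy : ∀ t, 0 ≤ t → HasDerivAt y (pEval p (y t)) t) {s t : ℝ} (hs : 0 ≤ s)
    (hst : s ≤ t) : pLen p y s ≤ pLen p y t :=
  intervalIntegral.integral_mono_interval le_rfl hs hst (.of_forall fun _ => norm_nonneg _)
    (intervalIntegrable_evalVec hy (hs.trans hst)).norm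

/-- A polynomial majorant of the speed of the system `y' = p(y)`. -/
def speedBound (p : Fin d → MvPolynomial (Fin d) ℝ) : MvPolynomial (Fin d) ℝ :=
  1 + ∑ i, p i ^ 2

theorem norm_pEval_le_speedBound (p : Fin d → MvPolynomial (Fin d) ℝ) (v : Fin d → ℝ) :
    ‖pEval p v‖ ≤ eval v (speedBound p) := by
  have hsum : 0 ≤ ∑ j, eval v (p j) ^ 2 := Finset.sum_nonneg fun _ _ => sq_nonneg _
  simp only [speedBound, map_add, map_one, map_sum, map_pow]
  refine (pi_norm_le_iff_of_nonneg (add_nonneg zero_le_one hsum)).2 fun i => ?_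
  have hi : eval v (p i) ^ 2 ≤ ∑ j, eval v (p j) ^ 2 :=
    Finset.single_le_sum (f := fun j => eval v (p j) ^ 2) (fun _ _ => sq_nonneg _)
      (Finset.mem_univ i)
  have habs : |eval v (p i)| ≤ 1 + eval v (p i) ^ 2 := by
    nlinarith [sq_abs (eval v (p i)), sq_nonneg (|eval v (p i)| - 1), abs_nonneg (eval v (p i))]
  exact habs.trans (add_le_add_right hi 1)

/-- `1 + a²`, where `a` is the derivative of the speed bound along the system; it dominates the
growth of the speed and is again polynomial. -/
def accelBound (p : Fin d → MvPolynomial (Fin d) ℝ) : MvPolynomial (Fin d) ℝ :=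
  1 + mkDerivation ℝ p (speedBound p) ^ 2

theorem eval_accelBound_nonneg (v : Fin d → ℝ) : 0 ≤ eval v (accelBound p) := by
  rw [accelBound, map_add, map_one, map_pow]
  positivity

theorem eval_speedBound_le (hy : ∀ t, 0 ≤ t → HasDerivAt y (pEval p (y t)) t) {t : ℝ}
    (ht : 0 ≤ t) : eval (y t) (speedBound p) ≤
      eval (y 0) (speedBound p) + ∫ s in 0..t, eval (y s) (accelBound p) := by
  have hint (P : MvPolynomial (Fin d) ℝ) :
      IntervalIntegrable (fun s => eval (y s) P) volume 0 t := by
    refine ContinuousOn.intervalIntegrable ?_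
    rw [uIcc_of_le ht]
    exact (continuousOn_eval hy P).mono Icc_subset_Ici_self
  have hFTC := intervalIntegral.integral_eq_sub_of_hasDerivAt
    (fun s hs => hasDerivAt_eval (hy s (by rw [uIcc_of_le ht] at hs; exact hs.1)) (speedBound p))
    (hint _)
  rw [← sub_le_iff_le_add', ← hFTC]
  refine intervalIntegral.integral_mono_on ht (hint _) (hint _) fun s _ => ?_
  rw [accelBound, map_add, map_one, map_pow]
  nlinarith [sq_nonneg (eval (y s) (mkDerivation ℝ p (speedBound p)) - 1)]

end CurveLength

section Slowdown

/-- The reciprocal speed, as a function of the position, of a motion along the time axis that is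
slowed down by the accumulated weight `w`. -/
def slowness (w : ℝ → ℝ) (u : ℝ) : ℝ := 1 + ∫ s in 0..u, w s

section

variable {w : ℝ → ℝ}

theorem slowness_zero : slowness w 0 = 1 := by simp [slowness]

theorem hasDerivAt_slowness (hw : Continuous w) (u : ℝ) : HasDerivAt (slowness w) (w u) u :=
  (hw.integral_hasStrictDerivAt 0 u).hasDerivAt.const_add 1

theorem continuous_slowness (hw : Continuous w) : Continuous (slowness w) :=
  continuous_iff_continuousAt.2 fun u => (hasDerivAt_slowness hw u).continuousAt

theorem one_le_slowness (hw0 : ∀ t, 0 ≤ w t) {u : ℝ} (hu : 0 ≤ u) : 1 ≤ slowness w u :=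
  le_add_of_nonneg_right (intervalIntegral.integral_nonneg hu fun s _ => hw0 s)

end

/-- The time change `τ`, with speed `g`, of a motion whose reciprocal speed is `slowness w`. -/
structure IsSlowdown (w τ g : ℝ → ℝ) : Prop where
  zero : τ 0 = 0
  speed_zero : g 0 = 1
  nonneg : ∀ t, 0 ≤ t → 0 ≤ τ t
  speed_mem_Icc : ∀ t, 0 ≤ t → g t ∈ Icc 0 1
  hasDerivAt : ∀ t, 0 ≤ t → HasDerivAt τ (g t) t
  hasDerivAt_speed : ∀ t, 0 ≤ t → HasDerivAt g (-w (τ t) * g t ^ 3) t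
  integral_eq : ∀ t, 0 ≤ t → ∫ s in 0..τ t, slowness w s = t

theorem exists_inverse_integral {h : ℝ → ℝ} (hc : Continuous h) (h1 : ∀ t, 1 ≤ h t) :
    ∃ τ : ℝ → ℝ, τ 0 = 0 ∧ Monotone τ ∧ (∀ t, HasDerivAt τ (h (τ t))⁻¹ t) ∧
      ∀ t, ∫ s in 0..τ t, h s = t := by
  set θ : ℝ → ℝ := fun u => ∫ s in 0..u, h s
  have hθ (t : ℝ) : HasDerivAt θ (h t) t := (hc.integral_hasStrictDerivAt 0 t).hasDerivAt
  have hθ_mono : StrictMono θ := strictMono_of_hasDerivAt_pos hθ fun t => by linarith [h1 t]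
  have hθ_cont : Continuous θ := continuous_iff_continuousAt.2 fun t => (hθ t).continuousAt
  have hθ_zero : θ 0 = 0 := intervalIntegral.integral_same
  have hsub (t : ℝ) : HasDerivAt (fun t => θ t - t) (h t - 1) t := (hθ t).sub (hasDerivAt_id t)
  have hge : Monotone fun t => θ t - t :=
    monotone_of_hasDerivAt_nonneg hsub fun t => sub_nonneg.2 (h1 t)
  have hsurj : Function.Surjective θ := by
    refine hθ_cont.surjective (tendsto_atTop_mono' _ ?_ tendsto_id)
      (tendsto_atBot_mono' _ ?_ tendsto_id)
    · filter_upwards [eventually_ge_atTop 0] with t ht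
      simpa [hθ_zero] using hge ht
    · filter_upwards [eventually_le_atBot 0] with t ht
      simpa [hθ_zero] using hge ht
  let e := hθ_mono.orderIsoOfSurjective θ hsurj
  have he (t : ℝ) : θ (e.symm t) = t := e.apply_symm_apply t
  refine ⟨e.symm, hθ_mono.injective (by rw [he, hθ_zero]), e.symm.monotone, fun t => ?_, he⟩
  have hne : h (e.symm t) ≠ 0 := (zero_lt_one.trans_le (h1 _)).ne'
  exact HasDerivAt.of_local_left_inverse e.symm.continuous.continuousAt (hθ _) hne (.of_forall he)

theorem exists_isSlowdown {w : ℝ → ℝ} (hw : Continuous w) (hw0 : ∀ t, 0 ≤ w t) :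
    ∃ τ g : ℝ → ℝ, IsSlowdown w τ g := by
  have hc := continuous_slowness hw
  obtain ⟨τ, hτ0, hτ_mono, hτ, hint⟩ := exists_inverse_integral (h := fun u => slowness w (max u 0))
    (by fun_prop) fun u => one_le_slowness hw0 (le_max_right _ _)
  have hτ_nonneg (t : ℝ) (ht : 0 ≤ t) : 0 ≤ τ t := hτ0.ge.trans (hτ_mono ht)
  have hτ' (t : ℝ) (ht : 0 ≤ t) : HasDerivAt τ (slowness w (τ t))⁻¹ t := by
    simpa only [max_eq_left (hτ_nonneg t ht)] using hτ t
  have hHτ (t : ℝ) (ht : 0 ≤ t) : 1 ≤ slowness w (τ t) := one_le_slowness hw0 (hτ_nonneg t ht)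
  refine ⟨τ, fun t => (slowness w (τ t))⁻¹, hτ0, by simp [hτ0, slowness_zero], hτ_nonneg,
    fun t ht => ?_, hτ', fun t ht => ?_, fun t ht => ?_⟩
  · exact ⟨inv_nonneg.2 (zero_le_one.trans (hHτ t ht)), inv_le_one_of_one_le₀ (hHτ t ht)⟩
  · have hne : slowness w (τ t) ≠ 0 := (zero_lt_one.trans_le (hHτ t ht)).ne'
    refine (((hasDerivAt_slowness hw (τ t)).comp t (hτ' t ht)).inv hne).congr_deriv ?_
    rw [Function.comp_apply]
    field_simp
  · refine (intervalIntegral.integral_congr fun s hs => ?_).trans (hint t)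
    rw [uIcc_of_le (hτ_nonneg t ht)] at hs
    simp only [max_eq_left hs.1]

namespace IsSlowdown

variable {w τ g : ℝ → ℝ} {t : ℝ}

theorem integral_le (h : IsSlowdown w τ g) (hw : Continuous w) (hw0 : ∀ t, 0 ≤ w t) (ht : 0 ≤ t)
    {v : ℝ → ℝ} (hv : IntervalIntegrable v volume 0 (τ t)) {A : ℝ} (hA : 0 ≤ A)
    (hvA : ∀ s, 0 ≤ s → v s ≤ A + slowness w s) :
    ∫ s in 0..τ t, v s ≤ (A + 1) * t := by
  have hτ := h.nonneg t ht
  calc ∫ s in 0..τ t, v s ≤ ∫ s in 0..τ t, (A + 1) * slowness w s := by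
        refine intervalIntegral.integral_mono_on hτ hv
          (((continuous_slowness hw).const_mul _).intervalIntegrable _ _) fun s hs => ?_
        nlinarith [hvA s hs.1, mul_le_mul_of_nonneg_left (one_le_slowness hw0 hs.1) hA]
    _ = (A + 1) * t := by rw [intervalIntegral.integral_const_mul, h.integral_eq t ht]

theorem time_le (h : IsSlowdown w τ g) (hw : Continuous w) (ht : 0 ≤ t) {W : ℝ} (hW0 : 0 ≤ W)
    (hW : ∀ s ∈ Icc 0 (τ t), w s ≤ W) : t ≤ τ t * (1 + τ t * W) := by
  have hτ := h.nonneg t ht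
  calc t = ∫ s in 0..τ t, slowness w s := (h.integral_eq t ht).symm
    _ ≤ ∫ _s in 0..τ t, (1 + τ t * W) := by
      refine intervalIntegral.integral_mono_on hτ ((continuous_slowness hw).intervalIntegrable _ _)
        intervalIntegrable_const fun s hs => ?_
      have hprim : ∫ r in 0..s, w r ≤ ∫ _r in 0..s, W :=
        intervalIntegral.integral_mono_on hs.1 (hw.intervalIntegrable _ _)
          intervalIntegrable_const fun r hr => hW r ⟨hr.1, hr.2.trans hs.2⟩
      rw [intervalIntegral.integral_const, smul_eq_mul, sub_zero] at hprim
      exact add_le_add_right (hprim.trans (mul_le_mul_of_nonneg_right hs.2 hW0)) 1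
    _ = τ t * (1 + τ t * W) := by
      rw [intervalIntegral.integral_const, smul_eq_mul, sub_zero]

end IsSlowdown

end Slowdown

section SlowedSystem

open MvPolynomial

variable {n d : ℕ} {p : Fin d → MvPolynomial (Fin d) ℝ} {y : ℝ → Fin d → ℝ} {τ g : ℝ → ℝ} {t : ℝ}

/-- The acceleration bound along `y`, extended to negative times by its value at `0`. -/
def slowWeight (p : Fin d → MvPolynomial (Fin d) ℝ) (y : ℝ → Fin d → ℝ) (s : ℝ) : ℝ :=
  eval (y (max s 0)) (accelBound p)

theorem continuous_slowWeight (hy : ∀ t, 0 ≤ t → HasDerivAt y (pEval p (y t)) t) :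
    Continuous (slowWeight p y) :=
  (continuousOn_eval hy (accelBound p)).comp_continuous (by fun_prop) fun s => le_max_right s 0

theorem slowWeight_nonneg (s : ℝ) : 0 ≤ slowWeight p y s :=
  eval_accelBound_nonneg _

theorem slowWeight_of_nonneg {s : ℝ} (hs : 0 ≤ s) :
    slowWeight p y s = eval (y s) (accelBound p) := by
  rw [slowWeight, max_eq_left hs]

theorem norm_pEval_le_slowness (hy : ∀ t, 0 ≤ t → HasDerivAt y (pEval p (y t)) t) (ht : 0 ≤ t) :
    ‖pEval p (y t)‖ ≤ eval (y 0) (speedBound p) + slowness (slowWeight p y) t := by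
  have hint : ∫ s in 0..t, slowWeight p y s = ∫ s in 0..t, eval (y s) (accelBound p) :=
    intervalIntegral.integral_congr fun s hs => by
      rw [uIcc_of_le ht] at hs
      exact slowWeight_of_nonneg hs.1
  have h := (norm_pEval_le_speedBound p (y t)).trans (eval_speedBound_le hy ht)
  rw [slowness, hint]
  linarith

namespace IsSlowdown

theorem pLen_le (h : IsSlowdown (slowWeight p y) τ g)
    (hy : ∀ t, 0 ≤ t → HasDerivAt y (pEval p (y t)) t) (ht : 0 ≤ t) :
    pLen p y (τ t) ≤ (eval (y 0) (speedBound p) + 1) * t :=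
  h.integral_le (continuous_slowWeight hy) slowWeight_nonneg ht
    (intervalIntegrable_evalVec hy (h.nonneg t ht)).norm
    ((norm_nonneg _).trans (norm_pEval_le_speedBound p (y 0)))
    fun _ hs => norm_pEval_le_slowness hy hs

theorem le_of_pLen_le (h : IsSlowdown (slowWeight p y) τ g)
    (hy : ∀ t, 0 ≤ t → HasDerivAt y (pEval p (y t)) t) (ht : 0 ≤ t) {c : ℕ}
    (hc : ∀ R : ℝ, 2 ≤ R → ∀ v : Fin d → ℝ, ‖v‖ ≤ R → |eval v (accelBound p)| ≤ R ^ c)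
    {L : ℝ} (hL : 1 ≤ L) (h0 : ‖y 0‖ ≤ L) (hτ : τ t ≤ L) (hlen : pLen p y (τ t) ≤ L) :
    t ≤ L * (1 + L * (2 * L) ^ c) := by
  have hW : ∀ s ∈ Icc 0 (τ t), slowWeight p y s ≤ (2 * L) ^ c := fun s hs => by
    have hys : ‖y s‖ ≤ 2 * L := by
      linarith [norm_le_insert' (y s) (y 0), norm_sub_le_pLen hy hs.1, pLen_le_pLen hy hs.1 hs.2]
    rw [slowWeight_of_nonneg hs.1]
    exact (le_abs_self _).trans (hc _ (by linarith) _ hys)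
  calc t ≤ τ t * (1 + τ t * (2 * L) ^ c) :=
        h.time_le (continuous_slowWeight hy) ht (by positivity) hW
    _ ≤ L * (1 + L * (2 * L) ^ c) := by
        have := h.nonneg t ht
        gcongr

end IsSlowdown

/-- The system solved by the slowed-down curve together with its speed, the coordinate `none`. -/
def slowField (p : Fin d → MvPolynomial (Fin d) ℝ) :
    Option (Fin d) → MvPolynomial (Option (Fin d)) ℝ
  | none => -rename some (accelBound p) * X none ^ 3
  | some i => X none * rename some (p i)

/-- The initial value of the slowed-down system, which ignores the precision. -/
def slowInit (q : Fin d → MvPolynomial (Fin n) ℝ) :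
    Option (Fin d) → MvPolynomial (Fin (n + 1)) ℝ
  | none => 1
  | some i => rename Fin.castSucc (q i)

/-- The curve `y ∘ τ` together with the speed `g` of the time change `τ`. -/
def slowCurve (y : ℝ → Fin d → ℝ) (τ g : ℝ → ℝ) (t : ℝ) : Option (Fin d) → ℝ :=
  fun o => o.elim (g t) (y (τ t))

theorem slowCurve_zero (h : IsSlowdown (slowWeight p y) τ g) {q : Fin d → MvPolynomial (Fin n) ℝ}
    {x : Fin n → ℝ} (hy0 : y 0 = evalVec q x) (μ : ℝ) :
    slowCurve y τ g 0 = evalVec (slowInit q) (Fin.snoc x μ) := by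
  ext (_ | i)
  · simp [slowCurve, slowInit, evalVec, h.speed_zero]
  · have hx : (Fin.snoc x μ : Fin (n + 1) → ℝ) ∘ Fin.castSucc = x :=
      Fin.init_snoc (α := fun _ => ℝ) μ x
    simp [slowCurve, slowInit, evalVec, h.zero, hy0, eval_rename, hx]

theorem hasDerivAt_slowCurve (h : IsSlowdown (slowWeight p y) τ g)
    (hy : ∀ t, 0 ≤ t → HasDerivAt y (pEval p (y t)) t) (ht : 0 ≤ t) :
    HasDerivAt (slowCurve y τ g) (evalVec (slowField p) (slowCurve y τ g t)) t := by
  have hτ := h.nonneg t ht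
  have hsome : slowCurve y τ g t ∘ some = y (τ t) := rfl
  refine hasDerivAt_pi.2 fun o => ?_
  rcases o with _ | i
  · refine (h.hasDerivAt_speed t ht).congr_deriv ?_
    simp [slowWeight_of_nonneg hτ, evalVec, slowField, eval_rename, hsome, slowCurve]
  · refine (hasDerivAt_pi.1 ((hy (τ t) hτ).scomp t (h.hasDerivAt t ht)) i).congr_deriv ?_
    simp [evalVec, slowField, eval_rename, hsome, slowCurve, pEval]

theorem norm_slowCurve_le (h : IsSlowdown (slowWeight p y) τ g)
    (hy : ∀ t, 0 ≤ t → HasDerivAt y (pEval p (y t)) t) (ht : 0 ≤ t) {A : ℝ} (h0 : ‖y 0‖ ≤ A)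
    (hspeed : eval (y 0) (speedBound p) ≤ A) : ‖slowCurve y τ g t‖ ≤ A + (A + 1) * t + 1 := by
  have hA : 0 ≤ A := (norm_nonneg _).trans h0
  have hbound : 0 ≤ A + (A + 1) * t := by positivity
  refine (pi_norm_le_iff_of_nonneg (by positivity)).2 fun o => ?_
  rcases o with _ | i
  · obtain ⟨hg0, hg1⟩ := h.speed_mem_Icc t ht
    exact (abs_of_nonneg hg0).trans_le (by linarith)
  · have hlen : pLen p y (τ t) ≤ (A + 1) * t := (h.pLen_le hy ht).trans (by gcongr)
    have hsub := norm_sub_le_pLen hy (h.nonneg t ht)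
    exact (norm_le_pi_norm (y (τ t)) i).trans (by linarith [norm_le_insert' (y (τ t)) (y 0)])

theorem AP.awp {n m : ℕ} {dom : Set (Fin n → ℝ)} {f : (Fin n → ℝ) → (Fin m → ℝ)}
    (hf : AP dom f) : AWP dom f := by
  obtain ⟨d, hd, p, q, Ω, hΩ, H⟩ := hf
  obtain ⟨c, hcΩ, hcq, hca, hcs⟩ := (hΩ.eventually_le_pow.and <|
    (eventually_norm_evalVec_le_pow q).and <| (eventually_abs_eval_le_pow (accelBound p)).and <|
    eventually_abs_eval_le_pow (bind₁ q (speedBound p))).exists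
  let L (a b : ℝ) : ℝ := (2 + a + b) ^ c
  refine AWP.of_fintype (Ω := fun a b => L a b * (1 + L a b * (2 * L a b) ^ c) + 1)
    (Υ := fun a b t => L a b + (L a b + 1) * t + 1)
    ((Fin.castLEEmb hd).trans Function.Embedding.some) (slowField p) (slowInit q)
    ⟨⟨(2 + X 0 + X 1) ^ c * (1 + (2 + X 0 + X 1) ^ c * (2 * (2 + X 0 + X 1) ^ c) ^ c) + 1,
      by simp [L]⟩, by intros; positivity⟩
    ⟨⟨(2 + X 0 + X 1) ^ c + ((2 + X 0 + X 1) ^ c + 1) * X 2 + 1, by simp [L]⟩,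
      by intros; positivity⟩ fun x hx μ hμ => ?_
  obtain ⟨y, hy0, hy, hout, hlen⟩ := H x hx
  obtain ⟨τ, g, h⟩ := exists_isSlowdown (continuous_slowWeight hy) slowWeight_nonneg
  have hS : 2 ≤ 2 + ‖x‖ + μ := by linarith [norm_nonneg x]
  have hxS : ‖x‖ ≤ 2 + ‖x‖ + μ := by linarith
  have hy0_le : ‖y 0‖ ≤ L ‖x‖ μ := hy0 ▸ hcq _ hS x hxS
  have hspeed : eval (y 0) (speedBound p) ≤ L ‖x‖ μ := by
    have hbind : eval (y 0) (speedBound p) = eval x (bind₁ q (speedBound p)) := by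
      rw [hy0]
      exact (eval₂Hom_bind₁ _ _ _ _).symm
    exact hbind.trans_le ((le_abs_self _).trans (hcs _ hS x hxS))
  refine ⟨slowCurve y τ g, slowCurve_zero h hy0 μ, fun t ht => hasDerivAt_slowCurve h hy ht,
    fun t ht hle => hout (τ t) (h.nonneg t ht) μ hμ (not_lt.1 fun hlt => ?_),
    fun t ht => norm_slowCurve_le h hy ht hy0_le hspeed⟩
  have hlenL : pLen p y (τ t) ≤ L ‖x‖ μ :=
    hlt.le.trans (hcΩ _ hS _ _ (by rwa [abs_norm])
      (by rw [abs_of_nonneg hμ]; linarith [norm_nonneg x]))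
  have htL := h.le_of_pLen_le hy ht hca (one_le_pow₀ (by linarith)) hy0_le
    ((hlen _ (h.nonneg t ht)).trans hlenL) hlenL
  linarith

end SlowedSystem

section Pulses

theorem eventually_pow_mul_exp_neg_le (a b : ℕ) : ∀ᶠ l : ℕ in atTop, ∀ s : ℝ, 2 ≤ s →
    s ^ a * Real.exp (-(s ^ l / 4)) ≤ 1 / 32 * Real.exp (-(s ^ b)) := by
  filter_upwards [eventually_ge_atTop (b + a + 8)] with l hl s hs
  have hpow : s ^ a ≤ Real.exp (a * s) := by
    rw [Real.exp_nat_mul]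
    exact pow_le_pow_left₀ (by linarith) (by linarith [Real.add_one_le_exp s]) a
  have hconst : Real.exp (-5) ≤ 1 / 32 := by
    rw [Real.exp_neg, one_div]
    refine inv_anti₀ (by norm_num) ?_
    have := Real.exp_one_pow 5 ▸ pow_le_pow_left₀ zero_le_two
      (show (2 : ℝ) ≤ Real.exp 1 by linarith [Real.add_one_le_exp 1]) 5
    norm_num at this
    exact this
  have hexponent : a * s + 5 + s ^ b ≤ s ^ l / 4 := by
    have ha : (a : ℝ) ≤ s ^ a :=
      calc (a : ℝ) ≤ 2 ^ a := by exact_mod_cast Nat.lt_two_pow_self.le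
        _ ≤ s ^ a := pow_le_pow_left₀ zero_le_two hs a
    have hb1 : 1 ≤ s ^ b := one_le_pow₀ (by linarith)
    have ha1 : 1 ≤ s ^ a := one_le_pow₀ (by linarith)
    set P := s ^ b * s ^ a * s
    have hP : 2 ≤ P := by nlinarith [one_le_mul_of_one_le_of_one_le hb1 ha1]
    have hP₁ : a * s ≤ P := by
      have : (a : ℝ) ≤ s ^ b * s ^ a := by nlinarith
      exact mul_le_mul_of_nonneg_right this (by linarith)
    have hP₂ : s ^ b ≤ P := by nlinarith [mul_le_mul ha1 hs (by norm_num) (by positivity)]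
    calc a * s + 5 + s ^ b ≤ P * 2 ^ 7 / 4 := by linarith
      _ ≤ P * s ^ 7 / 4 := by gcongr
      _ = s ^ (b + a + 8) / 4 := by simp only [P]; ring
      _ ≤ s ^ l / 4 := by gcongr; linarith
  calc s ^ a * Real.exp (-(s ^ l / 4)) ≤ Real.exp (a * s) * Real.exp (-(s ^ l / 4)) := by gcongr
    _ = Real.exp (a * s - s ^ l / 4) := by rw [← Real.exp_add, sub_eq_add_neg]
    _ ≤ Real.exp (-5 + -s ^ b) := Real.exp_le_exp.2 (by linarith)
    _ = Real.exp (-5) * Real.exp (-(s ^ b)) := Real.exp_add _ _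
    _ ≤ 1 / 32 * Real.exp (-(s ^ b)) := by gcongr

theorem pow_add_pow_add_three_le {s : ℝ} (hs : 2 ≤ s) {a b : ℕ} (hb : 1 ≤ b) (hab : a ≤ b) :
    s ^ b + s ^ a + 3 ≤ s ^ (b + 2) := by
  have hsab : s ^ a ≤ s ^ b := pow_le_pow_right₀ (by linarith) hab
  have h2 : 2 ≤ s ^ b := hs.trans (le_self_pow₀ (by linarith) (by omega))
  have hsq : 2 ^ 2 ≤ s ^ 2 := pow_le_pow_left₀ zero_le_two hs 2
  rw [pow_add]
  nlinarith

theorem cos_le_half {u : ℝ} (h₁ : Real.pi / 3 ≤ u) (h₂ : u ≤ 5 * Real.pi / 3) :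
    Real.cos u ≤ 1 / 2 := by
  have hpi := Real.pi_pos
  rw [← Real.cos_pi_div_three]
  rcases le_total u Real.pi with h | h
  · exact Real.cos_le_cos_of_nonneg_of_le_pi (by linarith) h h₁
  · rw [← Real.cos_two_pi_sub u]
    exact Real.cos_le_cos_of_nonneg_of_le_pi (by linarith) (by linarith) (by linarith)

theorem three_quarters_le_cos {u : ℝ} (h : |u| ≤ 1 / 2) : 3 / 4 ≤ Real.cos u := by
  have := Real.one_sub_sq_div_two_le_cos (x := u)
  have := sq_le_sq' (abs_le.1 h).1 (abs_le.1 h).2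
  linarith

theorem sigmoid_le_exp (x : ℝ) : Real.sigmoid x ≤ Real.exp x := by
  rw [Real.sigmoid_def, ← inv_inv (Real.exp x), ← Real.exp_neg]
  exact inv_anti₀ (Real.exp_pos _) (by linarith)

/-- The smooth gate of phase `φ`: close to `1` while `t` is near `φ` modulo `2π` and close to `0`
away from it, the more sharply so the larger `j` and `t` are. -/
def gate (R : ℝ) (j : ℕ) (φ t : ℝ) : ℝ :=
  Real.sigmoid ((R + t) ^ j * t * (Real.cos (t - φ) - 3 / 4))

/-- A train of pulses of phase `φ` and height about `t ^ (e + 1)`. -/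
def pulse (R : ℝ) (j : ℕ) (φ : ℝ) (e : ℕ) (t : ℝ) : ℝ :=
  t * (R + t) ^ e * gate R j φ t

variable {R : ℝ} {j : ℕ} {φ : ℝ} {e : ℕ} {s t : ℝ}

theorem gate_zero : gate R j φ 0 = 1 / 2 := by
  simp [gate, Real.sigmoid_zero]

theorem gate_nonneg : 0 ≤ gate R j φ t :=
  Real.sigmoid_nonneg _

theorem continuous_pulse : Continuous (pulse R j φ e) := by
  have : Continuous (gate R j φ) := continuous_sigmoid.comp (by fun_prop)
  unfold pulse
  fun_prop

theorem gate_le_exp_neg (hR : 2 ≤ R) (ht : 0 ≤ t) (hc : Real.cos (t - φ) ≤ 1 / 2) :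
    gate R j φ t ≤ Real.exp (-((R + t) ^ j * t / 4)) := by
  have : 0 ≤ (R + t) ^ j * t := by positivity
  exact (sigmoid_le_exp _).trans (Real.exp_le_exp.2 (by nlinarith))

theorem half_le_gate (hR : 2 ≤ R) (ht : 0 ≤ t) (hc : 3 / 4 ≤ Real.cos (t - φ)) :
    1 / 2 ≤ gate R j φ t := by
  rw [one_div, ← Real.sigmoid_zero]
  exact Real.sigmoid_le (mul_nonneg (by positivity) (by linarith))

theorem pulse_nonneg (hR : 2 ≤ R) (ht : 0 ≤ t) : 0 ≤ pulse R j φ e t :=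
  mul_nonneg (by positivity) gate_nonneg

theorem pulse_le_pow (hR : 2 ≤ R) (ht : 0 ≤ t) : pulse R j φ e t ≤ (R + t) ^ (e + 1) :=
  calc t * (R + t) ^ e * gate R j φ t ≤ (R + t) * (R + t) ^ e * 1 := by
        gcongr
        · exact gate_nonneg
        · linarith
        · exact Real.sigmoid_le_one _
    _ = (R + t) ^ (e + 1) := by ring

theorem pulse_mul_pow_le_four (hR : 2 ≤ R) (ht : 0 ≤ t) (hc : Real.cos (t - φ) ≤ 1 / 2) :
    pulse R j φ e t * (R + t) ^ j ≤ 4 * (R + t) ^ e := by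
  set x := (R + t) ^ j * t / 4 with hx
  have hxexp : x * Real.exp (-x) ≤ 1 := by
    rw [Real.exp_neg, ← div_eq_mul_inv, div_le_one (Real.exp_pos _)]
    linarith [Real.add_one_le_exp x]
  calc pulse R j φ e t * (R + t) ^ j = 4 * (R + t) ^ e * (x * gate R j φ t) := by
        rw [pulse, hx]; ring
    _ ≤ 4 * (R + t) ^ e * (x * Real.exp (-x)) := by gcongr; exact gate_le_exp_neg hR ht hc
    _ ≤ 4 * (R + t) ^ e := mul_le_of_le_one_right (by positivity) hxexp

theorem pulse_le_pow_mul_exp_neg (hR : 2 ≤ R) (ht : 1 ≤ t) (hc : Real.cos (t - φ) ≤ 1 / 2)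
    {l : ℕ} (hel : e ≤ l) (hs : 0 ≤ s) (hst : s ≤ R + t) (hts : R + t ≤ s ^ 4) :
    pulse R j φ e t ≤ s ^ (4 * (l + 1)) * Real.exp (-(s ^ j / 4)) := by
  have hgate : gate R j φ t ≤ Real.exp (-(s ^ j / 4)) := by
    refine (gate_le_exp_neg hR (by linarith) hc).trans (Real.exp_le_exp.2 ?_)
    have := mul_le_mul (pow_le_pow_left₀ hs hst j) ht zero_le_one (by positivity)
    linarith
  calc t * (R + t) ^ e * gate R j φ t ≤ (R + t) * (R + t) ^ e * Real.exp (-(s ^ j / 4)) := by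
        gcongr
        · exact gate_nonneg
        · linarith
    _ = (R + t) ^ (e + 1) * Real.exp (-(s ^ j / 4)) := by ring
    _ ≤ (R + t) ^ (l + 1) * Real.exp (-(s ^ j / 4)) := by gcongr; linarith
    _ ≤ (s ^ 4) ^ (l + 1) * Real.exp (-(s ^ j / 4)) := by gcongr
    _ = s ^ (4 * (l + 1)) * Real.exp (-(s ^ j / 4)) := by rw [← pow_mul]

theorem half_pow_le_pulse (hR : 2 ≤ R) (ht : 1 ≤ t) (hc : 3 / 4 ≤ Real.cos (t - φ)) (hs : 0 ≤ s)
    (hst : s ≤ R + t) : s ^ e / 2 ≤ pulse R j φ e t :=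
  calc s ^ e / 2 = 1 * s ^ e * (1 / 2) := by ring
    _ ≤ t * (R + t) ^ e * gate R j φ t := by
      gcongr
      exact half_le_gate hR (by linarith) hc

theorem le_integral_of_unit_window {g : ℝ → ℝ} (hg : Continuous g) {t₀ t₁ w b : ℝ}
    (h₀ : t₀ ≤ w - 1 / 2) (h₁ : w + 1 / 2 ≤ t₁) (hnonneg : ∀ t ∈ Icc t₀ t₁, 0 ≤ g t)
    (hb : ∀ t, |t - w| ≤ 1 / 2 → b ≤ g t) : b ≤ ∫ s in t₀..t₁, g s :=
  calc b = ∫ _ in (w - 1 / 2)..(w + 1 / 2), b := by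
        rw [intervalIntegral.integral_const, smul_eq_mul]; ring
    _ ≤ ∫ s in (w - 1 / 2)..(w + 1 / 2), g s :=
      intervalIntegral.integral_mono_on (by linarith) (by simp) (hg.intervalIntegrable _ _)
        fun u hu => hb u (abs_le.2 ⟨by linarith [hu.1], by linarith [hu.2]⟩)
    _ ≤ ∫ s in t₀..t₁, g s :=
      intervalIntegral.integral_mono_interval h₀ (by linarith) h₁
        ((ae_restrict_iff' measurableSet_Ioc).2 (.of_forall fun t ht =>
          hnonneg t (Ioc_subset_Icc_self ht))) (hg.intervalIntegrable _ _)

end Pulses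

section Clamp

variable {ι : Type*} {M : ℝ}

/-- Projection of `u` onto the cube `[-M, M] ^ ι`. -/
def clamp (M : ℝ) (u : ι → ℝ) : ι → ℝ := fun i => max (-M) (min M (u i))

theorem continuous_clamp {M : ℝ → ℝ} (hM : Continuous M) {u : ℝ → ι → ℝ} (hu : Continuous u) :
    Continuous fun t => clamp (M t) (u t) := by
  refine continuous_pi fun i => ?_
  unfold clamp
  fun_prop

variable [Fintype ι]

theorem norm_clamp_le (hM : 0 ≤ M) (u : ι → ℝ) : ‖clamp M u‖ ≤ M := by
  refine (pi_norm_le_iff_of_nonneg hM).2 fun i => abs_le.2 ⟨le_max_left _ _, ?_⟩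
  exact max_le (by linarith) (min_le_left _ _)

theorem clamp_eq_self {u : ι → ℝ} (h : ‖u‖ ≤ M) : clamp M u = u := by
  ext i
  have hi := abs_le.1 ((norm_le_pi_norm u i).trans h)
  simp [clamp, hi.1, hi.2]

theorem norm_clamp_sub_le (M : ℝ) (u v : ι → ℝ) : ‖clamp M u - clamp M v‖ ≤ ‖u - v‖ := by
  refine (pi_norm_le_iff_of_nonneg (norm_nonneg _)).2 fun i =>
    le_trans ?_ (norm_le_pi_norm (u - v) i)
  refine (abs_max_sub_max_le_max _ _ _ _).trans (max_le (by simp) ?_)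
  exact (abs_min_sub_min_le_max _ _ _ _).trans (max_le (by simp) le_rfl)

end Clamp

section Cycle

/-- The three phases of a cycle: the initial state for the current precision is loaded, the
simulated system is run, and its readout is emitted. -/
inductive Phase
  | load
  | run
  | emit
  deriving DecidableEq

instance : Fintype Phase where
  elems := {.load, .run, .emit}
  complete ph := by cases ph <;> simp

/-- The angle modulo `2π` around which a phase is active. -/
def Phase.angle : Phase → ℝ
  | load => 2 * Real.pi / 3
  | run => 4 * Real.pi / 3
  | emit => 0

/-- The time at which cycle `k` starts loading; cycle `k` is `[loadStart k, loadStart (k + 1)]`. -/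
def loadStart (k : ℕ) : ℝ := k * (2 * Real.pi) + Real.pi / 3

/-- The time at which cycle `k` stops loading and starts running. -/
def runStart (k : ℕ) : ℝ := k * (2 * Real.pi) + Real.pi

/-- The time at which cycle `k` starts emitting. -/
def emitStart (k : ℕ) : ℝ := k * (2 * Real.pi) + 5 * Real.pi / 3

theorem loadStart_zero : loadStart 0 = Real.pi / 3 := by
  simp [loadStart]

theorem loadStart_succ (k : ℕ) : loadStart (k + 1) = k * (2 * Real.pi) + 7 * Real.pi / 3 := by
  rw [loadStart]
  push_cast
  ring

theorem cycle_times (k : ℕ) : 1 ≤ loadStart k ∧ loadStart k + 2 ≤ runStart k ∧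
    runStart k ≤ loadStart k + 3 ∧ runStart k + 2 ≤ emitStart k ∧
    emitStart k + 2 ≤ loadStart (k + 1) ∧ loadStart (k + 1) ≤ runStart k + 5 ∧
    loadStart (k + 1) ≤ loadStart k + 7 := by
  have h₁ := Real.pi_gt_three
  have h₂ := Real.pi_lt_d2
  have hk : 0 ≤ k * (2 * Real.pi) := by positivity
  rw [loadStart_succ, loadStart, runStart, emitStart]
  refine ⟨?_, ?_, ?_, ?_, ?_, ?_, ?_⟩ <;> linarith

theorem exists_mem_cycle {t : ℝ} (ht : loadStart 0 ≤ t) :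
    ∃ k, t ∈ Icc (loadStart k) (loadStart (k + 1)) := by
  have hpi := Real.two_pi_pos
  rw [loadStart_zero, ← sub_nonneg] at ht
  refine ⟨⌊(t - Real.pi / 3) / (2 * Real.pi)⌋₊, ?_, ?_⟩
  · have := (le_div_iff₀ hpi).1 (Nat.floor_le (div_nonneg ht hpi.le))
    rw [loadStart]
    linarith
  · have := (div_lt_iff₀ hpi).1 (Nat.lt_floor_add_one ((t - Real.pi / 3) / (2 * Real.pi)))
    rw [loadStart]
    push_cast
    linarith

theorem cos_sub_le_half_of_mem (k : ℕ) {φ t : ℝ}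
    (ht : t ∈ Icc (k * (2 * Real.pi) + φ + Real.pi / 3) (k * (2 * Real.pi) + φ + 5 * Real.pi / 3)) :
    Real.cos (t - φ) ≤ 1 / 2 := by
  rw [← Real.cos_sub_nat_mul_two_pi _ k]
  exact cos_le_half (by linarith [ht.1]) (by linarith [ht.2])

theorem three_quarters_le_cos_sub (k : ℕ) {φ t : ℝ}
    (ht : |t - (k * (2 * Real.pi) + φ)| ≤ 1 / 2) : 3 / 4 ≤ Real.cos (t - φ) := by
  rw [← Real.cos_sub_nat_mul_two_pi _ k]
  exact three_quarters_le_cos (by convert ht using 2; ring)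

theorem cos_sub_run_le_half_of_le {t : ℝ} (ht0 : 0 ≤ t) (ht : t ≤ loadStart 0) :
    Real.cos (t - Phase.run.angle) ≤ 1 / 2 := by
  rw [loadStart_zero] at ht
  rw [← Real.cos_add_two_pi, Phase.angle]
  exact cos_le_half (by linarith) (by linarith)

theorem cos_sub_run_le_half (k : ℕ) {t : ℝ} (ht : t ∈ Icc (loadStart k) (runStart k)) :
    Real.cos (t - Phase.run.angle) ≤ 1 / 2 := by
  have hpi := Real.pi_pos
  simp only [loadStart, runStart, mem_Icc] at ht
  rw [← Real.cos_add_two_pi, show t - Phase.run.angle + 2 * Real.pi = t - (-(2 * Real.pi / 3)) by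
    rw [Phase.angle]; ring]
  exact cos_sub_le_half_of_mem k ⟨by linarith, by linarith⟩

theorem cos_sub_load_le_half (k : ℕ) {t : ℝ} (ht : t ∈ Icc (runStart k) (loadStart (k + 1))) :
    Real.cos (t - Phase.load.angle) ≤ 1 / 2 := by
  simp only [loadStart_succ, runStart, mem_Icc] at ht
  exact cos_sub_le_half_of_mem k (by rw [Phase.angle]; exact ⟨by linarith, by linarith⟩)

theorem cos_sub_emit_le_half (k : ℕ) {t : ℝ} (ht : t ∈ Icc (loadStart k) (emitStart k)) :
    Real.cos (t - Phase.emit.angle) ≤ 1 / 2 := by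
  simp only [loadStart, emitStart, mem_Icc] at ht
  exact cos_sub_le_half_of_mem k (by rw [Phase.angle]; exact ⟨by linarith, by linarith⟩)

end Cycle

section Schedule

/-- Exponent bounding the trajectories of the simulated system during a cycle. -/
def trajExp (c : ℕ) : ℕ := c * (c + 5)

/-- Exponent of the cube to which the simulated vector field is restricted. -/
def clampExp (c : ℕ) : ℕ := trajExp c + 3

/-- Exponent bounding all constants in the error estimates of a cycle. -/
def errExp (c : ℕ) : ℕ := 4 * (clampExp c * c) + 4 * clampExp c + 4 * c + 20

/-- The exponents of the cyclic simulation of a system all of whose bounds are polynomial of degree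
`deg`: the pulses have height about `t ^ loadExp` for loading and emitting and about
`t ^ (deg + 1)` for running, and `gateExp` is the sharpness of the gates. It is chosen last, so
that the inactive pulses are negligible even against the height of the active ones. -/
structure Schedule where
  deg : ℕ
  loadExp : ℕ
  gateExp : ℕ
  one_le_deg : 1 ≤ deg
  deg_lt_loadExp : deg + 1 ≤ loadExp
  lt_gateExp : deg + 1 + clampExp deg * deg + 2 ≤ gateExp
  load_error : ∀ s : ℝ, 2 ≤ s → s ^ errExp deg * Real.exp (-(s ^ loadExp / 4)) ≤
    1 / 32 * Real.exp (-(s ^ (errExp deg + 4)))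
  leak_error : ∀ s : ℝ, 2 ≤ s →
    s ^ errExp deg * (s ^ (4 * (loadExp + 1)) * Real.exp (-(s ^ gateExp / 4))) ≤
      1 / 32 * Real.exp (-(s ^ (errExp deg + 4)))

theorem exists_schedule {c : ℕ} (hc : 1 ≤ c) : ∃ K : Schedule, K.deg = c := by
  obtain ⟨l, hl, hcl⟩ := ((eventually_pow_mul_exp_neg_le (errExp c) (errExp c + 4)).and
    (eventually_ge_atTop (c + 1))).exists
  obtain ⟨j, hj, hcj⟩ := ((eventually_pow_mul_exp_neg_le (errExp c + 4 * (l + 1))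
    (errExp c + 4)).and (eventually_ge_atTop (c + 1 + clampExp c * c + 2))).exists
  exact ⟨⟨c, l, j, hc, hcl, hcj, hl, fun s hs => by rw [← mul_assoc, ← pow_add]; exact hj s hs⟩,
    rfl⟩

namespace Schedule

variable (K : Schedule)

/-- The exponent of the pulses of a phase. -/
def rateExp : Phase → ℕ
  | .load => K.loadExp
  | .run => K.deg + 1
  | .emit => K.loadExp

/-- The rate at which the activity of a phase proceeds. -/
def rate (R : ℝ) (ph : Phase) (t : ℝ) : ℝ := pulse R K.gateExp ph.angle (K.rateExp ph) t

/-- The maximal rate of an inactive phase during a cycle starting at scale `s`. -/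
def leak (s : ℝ) : ℝ := s ^ (4 * (K.loadExp + 1)) * Real.exp (-(s ^ K.gateExp / 4))

variable {K} {R s t : ℝ} {ph : Phase} {k : ℕ}

theorem leak_nonneg (hs : 0 ≤ s) : 0 ≤ K.leak s := by
  unfold leak
  positivity

theorem rateExp_le_loadExp : K.rateExp ph ≤ K.loadExp := by
  cases ph
  exacts [le_rfl, K.deg_lt_loadExp, le_rfl]

theorem three_le_scale (hR : 2 ≤ R) : 3 ≤ R + loadStart k := by
  linarith [(cycle_times k).1]

theorem add_le_pow_four (hR : 2 ≤ R) (ht : t ≤ loadStart (k + 1)) :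
    R + t ≤ (R + loadStart k) ^ 4 := by
  obtain ⟨-, -, -, -, -, -, hlen⟩ := cycle_times k
  have hs := three_le_scale hR (k := k)
  nlinarith [pow_le_pow_left₀ (by norm_num) hs 3, pow_succ (R + loadStart k) 3]

theorem add_pow_le_pow (hR : 2 ≤ R) (ht0 : 0 ≤ t) (ht : t ≤ loadStart (k + 1)) {e N : ℕ}
    (he : 4 * e ≤ N) : (R + t) ^ e ≤ (R + loadStart k) ^ N :=
  calc (R + t) ^ e ≤ ((R + loadStart k) ^ 4) ^ e :=
        pow_le_pow_left₀ (by linarith) (add_le_pow_four hR ht) e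
    _ = (R + loadStart k) ^ (4 * e) := by rw [← pow_mul]
    _ ≤ _ := pow_le_pow_right₀ (by linarith [three_le_scale hR (k := k)]) he

theorem continuous_rate : Continuous (K.rate R ph) :=
  continuous_pulse

theorem rate_nonneg (hR : 2 ≤ R) (ht : 0 ≤ t) : 0 ≤ K.rate R ph t :=
  pulse_nonneg hR ht

theorem integral_rate_nonneg (hR : 2 ≤ R) {t₀ : ℝ} (h0 : 0 ≤ t₀) (ht : t₀ ≤ t) :
    0 ≤ ∫ s in t₀..t, K.rate R ph s :=
  intervalIntegral.integral_nonneg ht fun _ hu => rate_nonneg hR (h0.trans hu.1)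

theorem rate_le_leak (hR : 2 ≤ R) (ht : t ∈ Icc (loadStart k) (loadStart (k + 1)))
    (hc : Real.cos (t - ph.angle) ≤ 1 / 2) : K.rate R ph t ≤ K.leak (R + loadStart k) :=
  pulse_le_pow_mul_exp_neg hR ((cycle_times k).1.trans ht.1) hc rateExp_le_loadExp
    (by linarith [three_le_scale hR (k := k)]) (by linarith [ht.1]) (add_le_pow_four hR ht.2)

theorem rate_run_le_leak (hR : 2 ≤ R) (ht : t ∈ Icc (loadStart k) (runStart k)) :
    K.rate R .run t ≤ K.leak (R + loadStart k) := by
  obtain ⟨-, -, -, hre, hel, -, -⟩ := cycle_times k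
  exact rate_le_leak hR ⟨ht.1, by linarith [ht.2]⟩ (cos_sub_run_le_half k ht)

theorem rate_load_le_leak (hR : 2 ≤ R) (ht : t ∈ Icc (runStart k) (loadStart (k + 1))) :
    K.rate R .load t ≤ K.leak (R + loadStart k) := by
  obtain ⟨-, hlr, -, -, -, -, -⟩ := cycle_times k
  exact rate_le_leak hR ⟨by linarith [ht.1], ht.2⟩ (cos_sub_load_le_half k ht)

theorem rate_emit_le_leak (hR : 2 ≤ R) (ht : t ∈ Icc (loadStart k) (emitStart k)) :
    K.rate R .emit t ≤ K.leak (R + loadStart k) := by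
  obtain ⟨-, -, -, -, hel, -, -⟩ := cycle_times k
  exact rate_le_leak hR ⟨ht.1, by linarith [ht.2]⟩ (cos_sub_emit_le_half k ht)

theorem half_pow_le_integral_rate (hR : 2 ≤ R) (hs : 0 ≤ s) {t₀ t₁ : ℝ} (h0 : 1 ≤ t₀)
    (hst : s ≤ R + t₀) (h₀ : t₀ + 1 / 2 ≤ k * (2 * Real.pi) + ph.angle)
    (h₁ : k * (2 * Real.pi) + ph.angle + 1 / 2 ≤ t₁) :
    s ^ K.rateExp ph / 2 ≤ ∫ t in t₀..t₁, K.rate R ph t := by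
  refine le_integral_of_unit_window continuous_rate (by linarith) h₁
    (fun t ht => rate_nonneg hR (by linarith [ht.1])) fun t ht => ?_
  have := (abs_le.1 ht).1
  exact half_pow_le_pulse hR (by linarith) (three_quarters_le_cos_sub k ht) hs (by linarith)

theorem pow_le_integral_load (hR : 2 ≤ R) :
    (R + loadStart k) ^ K.loadExp / 4 ≤ ∫ t in loadStart k..runStart k, K.rate R .load t := by
  have hpi := Real.pi_gt_three
  have hs := three_le_scale hR (k := k)
  have := half_pow_le_integral_rate (K := K) (ph := .load) (k := k) hR (by linarith)
    (cycle_times k).1 le_rfl (t₁ := runStart k) (by rw [loadStart, Phase.angle]; linarith)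
    (by rw [runStart, Phase.angle]; linarith)
  exact le_trans (by rw [rateExp]; gcongr; norm_num) this

theorem pow_le_integral_emit (hR : 2 ≤ R) : (R + loadStart k) ^ K.loadExp / 4 ≤
    ∫ t in emitStart k..loadStart (k + 1), K.rate R .emit t := by
  have hpi := Real.pi_gt_three
  have hs := three_le_scale hR (k := k)
  obtain ⟨hl, hlr, -, hre, -, -, -⟩ := cycle_times k
  have := half_pow_le_integral_rate (K := K) (s := R + loadStart k) (ph := .emit) (k := k + 1) hR
    (by linarith) (by linarith) (by linarith) (t₀ := emitStart k) (t₁ := loadStart (k + 1))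
    (by rw [emitStart, Phase.angle]; push_cast; linarith)
    (by rw [loadStart, Phase.angle]; linarith)
  exact le_trans (by rw [rateExp]; gcongr; norm_num) this

theorem pow_le_integral_run (hR : 2 ≤ R) (ht : emitStart k ≤ t) :
    (R + runStart k) ^ K.deg ≤ ∫ s in runStart k..t, K.rate R .run s := by
  have hpi := Real.pi_gt_three
  obtain ⟨hl, hlr, -, -, -, -, -⟩ := cycle_times k
  have hs : 2 ≤ R + runStart k := by linarith
  rw [emitStart] at ht
  have := half_pow_le_integral_rate (K := K) (ph := .run) (k := k) hR (by linarith)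
    (by linarith) le_rfl (t₁ := t) (by rw [runStart, Phase.angle]; linarith)
    (by rw [Phase.angle]; linarith)
  refine le_trans ?_ this
  rw [rateExp, pow_succ]
  nlinarith [pow_pos (zero_lt_two.trans_le hs) K.deg]

theorem leak_le_one (hs : 3 ≤ s) : K.leak s ≤ 1 := by
  have h1 : 1 ≤ s ^ errExp K.deg := one_le_pow₀ (by linarith)
  have h2 : Real.exp (-(s ^ (errExp K.deg + 4))) ≤ 1 :=
    Real.exp_le_one_iff.2 (neg_nonpos.2 (by positivity))
  have h3 := K.leak_error s (by linarith)
  have h4 := le_mul_of_one_le_left (leak_nonneg (K := K) (zero_le_three.trans hs)) h1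
  rw [leak] at h4 ⊢
  linarith

theorem mul_add_one_le_pow (hs : 3 ≤ s) :
    5 * (s ^ errExp K.deg + 1) + s ≤ s ^ (errExp K.deg + 4) := by
  have h1 : s ≤ s ^ errExp K.deg := le_self_pow₀ (by linarith) (by simp [errExp])
  have h4 : (3 : ℝ) ^ 4 ≤ s ^ 4 := pow_le_pow_left₀ (by norm_num) hs 4
  rw [pow_add]
  nlinarith

theorem exp_neg_pow_le (hs : 3 ≤ s) :
    Real.exp (-(s ^ (errExp K.deg + 4))) ≤ Real.exp (-s) := by
  have := mul_add_one_le_pow (K := K) hs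
  have h0 : 0 ≤ s ^ errExp K.deg := by positivity
  exact Real.exp_le_exp.2 (by linarith)

theorem pow_mul_exp_load_le (hs : 3 ≤ s) :
    s ^ errExp K.deg * Real.exp (-(s ^ K.loadExp / 4)) ≤ Real.exp (-s) / 32 := by
  linarith [K.load_error s (by linarith), exp_neg_pow_le (K := K) hs]

theorem pow_mul_leak_le (hs : 3 ≤ s) : s ^ errExp K.deg * K.leak s ≤ Real.exp (-s) / 32 := by
  have := K.leak_error s (by linarith)
  rw [leak]
  linarith [exp_neg_pow_le (K := K) hs]

theorem cycle_error_mul_exp_le (hs : 3 ≤ s) :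
    (2 * (s ^ errExp K.deg * Real.exp (-(s ^ K.loadExp / 4))) +
        16 * (s ^ errExp K.deg * K.leak s)) *
      Real.exp ((s ^ errExp K.deg + K.leak s) * 5) ≤ Real.exp (-s) := by
  have hload := K.load_error s (by linarith)
  have hleak := K.leak_error s (by linarith)
  have h1 := leak_le_one (K := K) hs
  rw [← leak] at hleak
  calc _ ≤ Real.exp (-(s ^ (errExp K.deg + 4))) * Real.exp ((s ^ errExp K.deg + 1) * 5) := by
        gcongr
        linarith [Real.exp_pos (-(s ^ (errExp K.deg + 4)))]
    _ = Real.exp (-(s ^ (errExp K.deg + 4)) + (s ^ errExp K.deg + 1) * 5) := by rw [Real.exp_add]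
    _ ≤ Real.exp (-s) :=
      Real.exp_le_exp.2 (by linarith [mul_add_one_le_pow (K := K) hs])

end Schedule

end Schedule

section ApproxFlow

/-- Trajectories `traj μ` of the autonomous system `y' = field y`, started at `init μ`, whose
readouts approach `limit` up to `exp (-μ)`. All growth conditions are polynomial of degree `c`: they
bound the data on balls of radius `S` by `S ^ c` once `S` is at least `scale`. -/
structure ApproxFlow (c : ℕ) (ι F : Type*) [Fintype ι] [NormedAddCommGroup F] where
  scale : ℝ
  field : (ι → ℝ) → ι → ℝ
  init : ℝ → ι → ℝ
  traj : ℝ → ℝ → ι → ℝ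
  readout : (ι → ℝ) → F
  limit : F
  two_le_scale : 2 ≤ scale
  continuous_field : Continuous field
  continuous_init : Continuous init
  lipschitz_readout : LipschitzWith 1 readout
  readout_zero : readout 0 = 0
  traj_zero : ∀ μ, 0 ≤ μ → traj μ 0 = init μ
  hasDerivAt_traj : ∀ μ τ, 0 ≤ μ → 0 ≤ τ → HasDerivAt (traj μ) (field (traj μ τ)) τ
  norm_field_le : ∀ S v, scale ≤ S → ‖v‖ ≤ S → ‖field v‖ ≤ S ^ c
  norm_field_sub_le : ∀ S v w, scale ≤ S → ‖v‖ ≤ S → ‖w‖ ≤ S →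
    ‖field v - field w‖ ≤ S ^ c * ‖v - w‖
  norm_init_le : ∀ S μ, scale ≤ S → μ ∈ Icc 0 S → ‖init μ‖ ≤ S ^ c
  norm_init_sub_le : ∀ S μ ν, scale ≤ S → μ ∈ Icc 0 S → ν ∈ Icc 0 S →
    ‖init μ - init ν‖ ≤ S ^ c * |μ - ν|
  norm_traj_le : ∀ S μ τ, scale ≤ S → μ ∈ Icc 0 S → τ ∈ Icc 0 S → ‖traj μ τ‖ ≤ S ^ c
  norm_readout_traj_sub_le : ∀ S μ τ, scale ≤ S → μ ∈ Icc 0 S → S ^ c ≤ τ →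
    ‖readout (traj μ τ) - limit‖ ≤ Real.exp (-μ)

namespace ApproxFlow

variable {c : ℕ} {ι F : Type*} [Fintype ι] [NormedAddCommGroup F] (D : ApproxFlow c ι F)

/-- The field of the flow, made bounded by evaluating it at the projection to a cube. -/
def clampedField (S : ℝ) (v : ι → ℝ) : ι → ℝ := D.field (clamp (S ^ clampExp c) v)

variable {D} {S : ℝ}

theorem le_pow_clampExp (hS : D.scale ≤ S) : D.scale ≤ S ^ clampExp c :=
  hS.trans (le_self_pow₀ (by linarith [D.two_le_scale]) (by simp [clampExp]))

theorem norm_clampedField_le (hS : D.scale ≤ S) (v : ι → ℝ) :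
    ‖D.clampedField S v‖ ≤ S ^ (clampExp c * c) := by
  have hS0 : 0 ≤ S := by linarith [D.two_le_scale]
  rw [pow_mul]
  exact D.norm_field_le _ _ (le_pow_clampExp hS) (norm_clamp_le (by positivity) v)

theorem norm_clampedField_sub_le (hS : D.scale ≤ S) (v w : ι → ℝ) :
    ‖D.clampedField S v - D.clampedField S w‖ ≤ S ^ (clampExp c * c) * ‖v - w‖ := by
  have hS0 : 0 ≤ S := by linarith [D.two_le_scale]
  have hM : 0 ≤ S ^ clampExp c := by positivity
  rw [pow_mul]
  exact (D.norm_field_sub_le _ _ _ (le_pow_clampExp hS) (norm_clamp_le hM v)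
    (norm_clamp_le hM w)).trans
    (mul_le_mul_of_nonneg_left (norm_clamp_sub_le _ v w) (by positivity))

theorem clampedField_eq {v : ι → ℝ} (hv : ‖v‖ ≤ S ^ clampExp c) :
    D.clampedField S v = D.field v := by
  rw [clampedField, clamp_eq_self hv]

theorem isTameField_smul_clampedField {α : ℝ → ℝ} (hα : Continuous α) :
    IsTameField fun t u => α t • D.clampedField (D.scale + |t|) u := by
  have hscale (t : ℝ) : D.scale ≤ D.scale + |t| := le_add_of_nonneg_right (abs_nonneg t)
  have bdd (T : ℝ) : ∃ C : ℝ≥0, ∀ t ∈ Icc (-T) T,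
      ‖α t‖ * (D.scale + |t|) ^ (clampExp c * c) ≤ C := by
    obtain ⟨C, hC⟩ := (isCompact_Icc (a := -T) (b := T)).bddAbove_image
      (f := fun t => ‖α t‖ * (D.scale + |t|) ^ (clampExp c * c)) (by fun_prop)
    exact ⟨C.toNNReal, fun t ht => (hC ⟨t, ht, rfl⟩).trans (Real.le_coe_toNNReal C)⟩
  refine ⟨fun u hu => ?_, fun T => ?_, fun T => ?_⟩
  · exact hα.smul (D.continuous_field.comp
      (continuous_clamp (M := fun t => (D.scale + |t|) ^ clampExp c) (by fun_prop) hu))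
  · obtain ⟨C, hC⟩ := bdd T
    refine ⟨C, fun t ht => LipschitzWith.of_dist_le_mul fun u v => ?_⟩
    rw [dist_eq_norm, dist_eq_norm, ← smul_sub, norm_smul]
    calc _ ≤ ‖α t‖ * ((D.scale + |t|) ^ (clampExp c * c) * ‖u - v‖) := by
          gcongr; exact norm_clampedField_sub_le (hscale t) u v
      _ ≤ C * ‖u - v‖ := by rw [← mul_assoc]; gcongr; exact hC t ht
  · obtain ⟨C, hC⟩ := bdd T
    refine ⟨C, fun t ht u => le_trans ?_ (hC t ht)⟩
    rw [norm_smul]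
    gcongr
    exact norm_clampedField_le (hscale t) u

theorem norm_readout_sub_le (u v : ι → ℝ) : ‖D.readout u - D.readout v‖ ≤ ‖u - v‖ := by
  simpa [dist_eq_norm] using D.lipschitz_readout.dist_le_mul u v

theorem norm_readout_le (u : ι → ℝ) : ‖D.readout u‖ ≤ ‖u‖ := by
  simpa [D.readout_zero] using D.norm_readout_sub_le u 0

theorem norm_limit_le (hc : 1 ≤ c) (hS : D.scale ≤ S) : ‖D.limit‖ ≤ S ^ clampExp c := by
  have hR := D.two_le_scale
  have hRc : D.scale ≤ D.scale ^ c := le_self_pow₀ (by linarith) (by omega)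
  have hR0 : 0 ≤ D.scale ^ c := by linarith
  have hconv := D.norm_readout_traj_sub_le D.scale 0 _ le_rfl ⟨le_rfl, by linarith⟩ le_rfl
  have htraj := D.norm_traj_le _ 0 _ hRc ⟨le_rfl, hR0⟩ ⟨hR0, le_rfl⟩
  rw [neg_zero, Real.exp_zero] at hconv
  rw [← pow_mul] at htraj
  have hpow := pow_add_pow_add_three_le hR (a := 0) (b := c * c) (Nat.mul_pos hc hc) (Nat.zero_le _)
  have hexp : D.scale ^ (c * c + 2) ≤ S ^ clampExp c :=
    (pow_le_pow_left₀ (by linarith) hS _).trans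
      (pow_le_pow_right₀ (by linarith) (by unfold clampExp trajExp; nlinarith))
  linarith [norm_le_insert (D.readout (D.traj 0 (D.scale ^ c))) D.limit,
    D.norm_readout_le (D.traj 0 (D.scale ^ c)), pow_zero D.scale]

end ApproxFlow

/-- The cyclic simulation of an approximating flow: while the precision `level` is held, `state` is
reset to `D.init level` and then driven by the field of `D`; afterwards `output` is drawn to the
readout of `state` and `level` to the time `t`. -/
structure Simulation (K : Schedule) {ι F : Type*} [Fintype ι] [NormedAddCommGroup F]
    [NormedSpace ℝ F] (D : ApproxFlow K.deg ι F) where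
  state : ℝ → ι → ℝ
  level : ℝ → ℝ
  output : ℝ → F
  state_zero : state 0 = D.init 0
  level_zero : level 0 = 0
  output_zero : output 0 = 0
  hasDerivAt_state : ∀ t, HasDerivAt state
    (K.rate D.scale .run t • D.clampedField (D.scale + |t|) (state t) +
      K.rate D.scale .load t • (D.init (level t) - state t)) t
  hasDerivAt_level : ∀ t, HasDerivAt level (K.rate D.scale .emit t • (t - level t)) t
  hasDerivAt_output : ∀ t,
    HasDerivAt output (K.rate D.scale .emit t • (D.readout (state t) - output t)) t

namespace Simulation

variable {K : Schedule} {ι F : Type*} [Fintype ι] [NormedAddCommGroup F] [NormedSpace ℝ F]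
  {D : ApproxFlow K.deg ι F}

theorem nonempty [CompleteSpace F] : Nonempty (Simulation K D) := by
  obtain ⟨level, hl0, hl⟩ := exists_hasDerivAt_add_smul_sub isTameField_zero
    (Schedule.continuous_rate (K := K) (R := D.scale) (ph := .emit)) continuous_id (0 : ℝ)
  obtain ⟨state, hs0, hs⟩ := exists_hasDerivAt_add_smul_sub
    (D.isTameField_smul_clampedField
      (Schedule.continuous_rate (K := K) (R := D.scale) (ph := .run)))
    (Schedule.continuous_rate (K := K) (R := D.scale) (ph := .load))
    (D.continuous_init.comp (continuous_iff_continuousAt.2 fun t => (hl t).continuousAt)) (D.init 0)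
  obtain ⟨output, ho0, ho⟩ := exists_hasDerivAt_add_smul_sub isTameField_zero
    (Schedule.continuous_rate (K := K) (R := D.scale) (ph := .emit))
    (D.lipschitz_readout.continuous.comp
      (continuous_iff_continuousAt.2 fun t => (hs t).continuousAt)) (0 : F)
  exact ⟨⟨state, level, output, hs0, hl0, ho0, hs, by simpa using hl, by simpa using ho⟩⟩

variable (Y : Simulation K D) {t t₀ t₁ η ε : ℝ} {k : ℕ}

theorem relaxesOn_level {c : ℝ} (h₀ : 0 ≤ t₀) (hη : ∀ t ∈ Icc t₀ t₁, |t - c| ≤ η) :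
    RelaxesOn Y.level (K.rate D.scale .emit) c η 0 t₀ t₁ where
  continuous_rate := Schedule.continuous_rate
  rate_nonneg _ ht := Schedule.rate_nonneg D.two_le_scale (h₀.trans ht.1)
  deriv t ht := ⟨t, 0, hη t ht, norm_zero.le, by simpa using Y.hasDerivAt_level t⟩

theorem relaxesOn_output {c : F} (h₀ : 0 ≤ t₀)
    (hη : ∀ t ∈ Icc t₀ t₁, ‖D.readout (Y.state t) - c‖ ≤ η) :
    RelaxesOn Y.output (K.rate D.scale .emit) c η 0 t₀ t₁ where
  continuous_rate := Schedule.continuous_rate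
  rate_nonneg _ ht := Schedule.rate_nonneg D.two_le_scale (h₀.trans ht.1)
  deriv t ht := ⟨_, 0, hη t ht, norm_zero.le, by simpa using Y.hasDerivAt_output t⟩

theorem relaxesOn_state {c : ι → ℝ} (h₀ : 0 ≤ t₀)
    (hη : ∀ t ∈ Icc t₀ t₁, ‖D.init (Y.level t) - c‖ ≤ η)
    (hε : ∀ t ∈ Icc t₀ t₁,
      K.rate D.scale .run t * ‖D.clampedField (D.scale + t) (Y.state t)‖ ≤ ε) :
    RelaxesOn Y.state (K.rate D.scale .load) c η ε t₀ t₁ where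
  continuous_rate := Schedule.continuous_rate
  rate_nonneg _ ht := Schedule.rate_nonneg D.two_le_scale (h₀.trans ht.1)
  deriv t ht := by
    refine ⟨_, _, hη t ht, ?_, Y.hasDerivAt_state t⟩
    have ht0 := h₀.trans ht.1
    rw [norm_smul, Real.norm_of_nonneg (Schedule.rate_nonneg D.two_le_scale ht0), abs_of_nonneg ht0]
    exact hε t ht

theorem level_mem_Icc (ht : 0 ≤ t) : Y.level t ∈ Icc 0 t := by
  have h := (Y.relaxesOn_level (c := t / 2) (η := t / 2) le_rfl fun s hs =>
    abs_le.2 ⟨by linarith [hs.1], by linarith [hs.2]⟩).norm_sub_le_of_le ⟨ht, le_rfl⟩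
    (by rw [Y.level_zero, zero_sub, norm_neg, Real.norm_of_nonneg (by linarith)])
  have := abs_le.1 h
  constructor <;> linarith

theorem monotoneOn_level : MonotoneOn Y.level (Ici 0) := by
  refine monotoneOn_of_deriv_nonneg (convex_Ici 0)
    (fun t _ => (Y.hasDerivAt_level t).continuousAt.continuousWithinAt)
    (fun t _ => (Y.hasDerivAt_level t).differentiableAt.differentiableWithinAt) fun t ht => ?_
  rw [interior_Ici, mem_Ioi] at ht
  rw [(Y.hasDerivAt_level t).deriv]
  exact mul_nonneg (Schedule.rate_nonneg D.two_le_scale ht.le)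
    (sub_nonneg.2 (Y.level_mem_Icc ht.le).2)

theorem level_mem_Icc_scale {T : ℝ} (ht : 0 ≤ t) (htT : t ≤ T) :
    Y.level t ∈ Icc 0 (D.scale + T) := by
  obtain ⟨h0, h1⟩ := Y.level_mem_Icc ht
  exact ⟨h0, by linarith [D.two_le_scale]⟩

theorem norm_init_level_le {T : ℝ} (ht : 0 ≤ t) (htT : t ≤ T) :
    ‖D.init (Y.level t)‖ ≤ (D.scale + T) ^ K.deg :=
  D.norm_init_le _ _ (by linarith) (Y.level_mem_Icc_scale ht htT)

theorem run_drift_le_one (ht : 0 ≤ t) (hcos : Real.cos (t - Phase.run.angle) ≤ 1 / 2) :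
    K.rate D.scale .run t * ‖D.clampedField (D.scale + t) (Y.state t)‖ ≤ 1 := by
  have hR := D.two_le_scale
  set S := D.scale + t
  have hS : 2 ≤ S := by simp only [S]; linarith
  have hα := Schedule.rate_nonneg (K := K) (ph := .run) hR ht
  have hpulse : K.rate D.scale .run t * S ^ K.gateExp ≤ 2 ^ 2 * S ^ (K.deg + 1) :=
    (pulse_mul_pow_le_four (e := K.deg + 1) hR ht hcos).trans_eq (by norm_num [S])
  refine le_of_mul_le_mul_right ?_ (show 0 < S ^ K.gateExp by positivity)
  calc K.rate D.scale .run t * ‖D.clampedField S (Y.state t)‖ * S ^ K.gateExp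
      ≤ K.rate D.scale .run t * S ^ (clampExp K.deg * K.deg) * S ^ K.gateExp := by
        gcongr; exact D.norm_clampedField_le (by simp only [S]; linarith) _
    _ = K.rate D.scale .run t * S ^ K.gateExp * S ^ (clampExp K.deg * K.deg) := by ring
    _ ≤ 2 ^ 2 * S ^ (K.deg + 1) * S ^ (clampExp K.deg * K.deg) := by
        gcongr
    _ ≤ S ^ 2 * S ^ (K.deg + 1) * S ^ (clampExp K.deg * K.deg) := by gcongr
    _ = S ^ (K.deg + 1 + clampExp K.deg * K.deg + 2) := by ring
    _ ≤ 1 * S ^ K.gateExp := by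
        rw [one_mul]; exact pow_le_pow_right₀ (by linarith) K.lt_gateExp

theorem norm_state_le_of_not_running {b : ℕ} (h₀ : 0 ≤ t₀) (ht : t₀ ≤ t) (hlen : t ≤ t₀ + 3)
    (hcos : ∀ u ∈ Icc t₀ t, Real.cos (u - Phase.run.angle) ≤ 1 / 2) (hb : K.deg ≤ b)
    (hinit : ‖Y.state t₀‖ ≤ (D.scale + t₀) ^ b) : ‖Y.state t‖ ≤ (D.scale + t) ^ (b + 2) := by
  have hR := D.two_le_scale
  have h := (Y.relaxesOn_state (c := 0) (η := (D.scale + t) ^ K.deg) (ε := 1) h₀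
    (fun u hu => by simpa using Y.norm_init_level_le (h₀.trans hu.1) hu.2)
    fun u hu => Y.run_drift_le_one (h₀.trans hu.1) (hcos u hu)).norm_sub_le_add ⟨ht, le_rfl⟩
  rw [sub_zero, sub_zero] at h
  have hmono : (D.scale + t₀) ^ b ≤ (D.scale + t) ^ b := by gcongr
  linarith [pow_add_pow_add_three_le (show 2 ≤ D.scale + t by linarith)
    (K.one_le_deg.trans hb) hb]

theorem norm_state_le_of_le_loadStart_zero (ht0 : 0 ≤ t) (ht : t ≤ loadStart 0) :
    ‖Y.state t‖ ≤ (D.scale + t) ^ (trajExp K.deg + 1) := by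
  have hR := D.two_le_scale
  have hc := K.one_le_deg
  have hpi := Real.pi_lt_d2
  rw [loadStart_zero] at ht
  refine (Y.norm_state_le_of_not_running (b := K.deg) le_rfl ht0 (by linarith)
    (fun u hu => cos_sub_run_le_half_of_le hu.1 (by rw [loadStart_zero]; exact hu.2.trans ht))
    le_rfl ?_).trans (pow_le_pow_right₀ (by linarith) (by unfold trajExp; nlinarith))
  rw [Y.state_zero]
  exact D.norm_init_le _ _ (by linarith) ⟨le_rfl, by linarith⟩

end Simulation

end ApproxFlow

section Tracking

theorem le_trajExp (c : ℕ) : c ≤ trajExp c :=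
  Nat.le_mul_of_pos_right c (Nat.succ_pos _)

namespace Schedule

/-- The time for which the simulated system has been run in cycle `k`. -/
def runClock (K : Schedule) (R : ℝ) (k : ℕ) (t : ℝ) : ℝ := ∫ s in runStart k..t, K.rate R .run s

variable {K : Schedule} {R t : ℝ} {k : ℕ}

theorem hasDerivAt_runClock : HasDerivAt (K.runClock R k) (K.rate R .run t) t :=
  (continuous_rate.integral_hasStrictDerivAt _ t).hasDerivAt

theorem runClock_mem_Icc (hR : 2 ≤ R) (ht : t ∈ Icc (runStart k) (loadStart (k + 1))) :
    K.runClock R k t ∈ Icc 0 ((R + t) ^ (K.deg + 5)) := by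
  obtain ⟨hl, hlr, -, -, -, hlen, -⟩ := cycle_times k
  have hS : 2 ≤ R + t := by linarith [ht.1]
  refine ⟨integral_rate_nonneg hR (by linarith) ht.1, ?_⟩
  have hrate (s) (hs : s ∈ Icc (runStart k) t) :
      K.rate R .run s ≤ (R + t) ^ (K.deg + 1 + 1) :=
    (pulse_le_pow hR (by linarith [hs.1])).trans
      (pow_le_pow_left₀ (by linarith [hs.1]) (by linarith [hs.2]) _)
  calc K.runClock R k t ≤ ∫ _ in runStart k..t, (R + t) ^ (K.deg + 1 + 1) :=
        intervalIntegral.integral_mono_on ht.1 (continuous_rate.intervalIntegrable _ _) (by simp)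
          hrate
    _ = (t - runStart k) * (R + t) ^ (K.deg + 2) := by
      rw [intervalIntegral.integral_const, smul_eq_mul]
    _ ≤ (R + t) ^ 3 * (R + t) ^ (K.deg + 2) := by
      gcongr
      linarith [pow_le_pow_left₀ zero_le_two hS 3, ht.2]
    _ = (R + t) ^ (K.deg + 5) := by ring

end Schedule

namespace ApproxFlow

open Schedule

theorem norm_sub_limit_le {K : Schedule} {ι F : Type*} [Fintype ι] [NormedAddCommGroup F]
    {D : ApproxFlow K.deg ι F} {v : F} {t : ℝ} {k : ℕ} (ht0 : 0 ≤ t)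
    (ht : t ≤ loadStart (k + 1)) (hv : ‖v‖ ≤ (D.scale + t) ^ clampExp K.deg) :
    ‖v - D.limit‖ ≤ 2 * (D.scale + loadStart k) ^ errExp K.deg := by
  have hlim := norm_limit_le (D := D) K.one_le_deg (S := D.scale + t) (by linarith)
  have hexp := add_pow_le_pow D.two_le_scale ht0 ht (show 4 * clampExp K.deg ≤ errExp K.deg by
    unfold errExp; omega)
  linarith [norm_sub_le v D.limit]

end ApproxFlow

namespace Simulation

open Schedule

variable {K : Schedule} {ι F : Type*} [Fintype ι] [NormedAddCommGroup F] [NormedSpace ℝ F]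
  {D : ApproxFlow K.deg ι F} (Y : Simulation K D) {t : ℝ} {k : ℕ}

theorem abs_level_sub_level_runStart_le (ht : t ∈ Icc (loadStart k) (runStart k)) :
    |Y.level t - Y.level (runStart k)| ≤
      3 * ((D.scale + loadStart k) ^ 4 * K.leak (D.scale + loadStart k)) := by
  have hR := D.two_le_scale
  obtain ⟨hl, hlr, hrl, hre, hel, -, -⟩ := cycle_times k
  have hleak := leak_nonneg (K := K) (s := D.scale + loadStart k) (by linarith)
  have hderiv (u : ℝ) (hu : u ∈ Icc (loadStart k) (runStart k)) :
      ‖K.rate D.scale .emit u • (u - Y.level u)‖ ≤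
        (D.scale + loadStart k) ^ 4 * K.leak (D.scale + loadStart k) := by
    have hu0 : 0 ≤ u := by linarith [hu.1]
    have hlevel := Y.level_mem_Icc hu0
    rw [norm_smul, Real.norm_of_nonneg (rate_nonneg hR hu0),
      Real.norm_of_nonneg (sub_nonneg.2 hlevel.2), mul_comm]
    refine mul_le_mul ?_ (rate_emit_le_leak hR ⟨hu.1, by linarith [hu.2]⟩) (rate_nonneg hR hu0)
      (by positivity)
    linarith [add_le_pow_four hR (k := k) (t := u) (by linarith [hu.2]), hlevel.1]
  have h := (convex_Icc _ _).norm_image_sub_le_of_norm_hasDerivWithin_le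
    (fun u _ => (Y.hasDerivAt_level u).hasDerivWithinAt) hderiv ⟨by linarith, le_rfl⟩ ht
  refine h.trans (mul_comm (3 : ℝ) _ ▸ mul_le_mul_of_nonneg_left ?_ (by positivity))
  rw [Real.norm_of_nonpos] <;> linarith [ht.1, ht.2]

/-- The simulated trajectory that `state` follows during the running part of cycle `k`. -/
def simTraj (k : ℕ) (t : ℝ) : ι → ℝ := D.traj (Y.level (runStart k)) (K.runClock D.scale k t)

theorem simTraj_runStart : Y.simTraj k (runStart k) = D.init (Y.level (runStart k)) := by
  obtain ⟨hl, hlr, -, -, -, -, -⟩ := cycle_times k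
  rw [simTraj, runClock, intervalIntegral.integral_same,
    D.traj_zero _ (Y.level_mem_Icc (by linarith)).1]

theorem norm_simTraj_le (ht : t ∈ Icc (runStart k) (loadStart (k + 1))) :
    ‖Y.simTraj k t‖ ≤ (D.scale + t) ^ trajExp K.deg := by
  have hR := D.two_le_scale
  obtain ⟨hl, hlr, -, -, -, -, -⟩ := cycle_times k
  have hS : D.scale + t ≤ (D.scale + t) ^ (K.deg + 5) :=
    le_self_pow₀ (by linarith [ht.1]) (by omega)
  have hlevel := Y.level_mem_Icc_scale (t := runStart k) (by linarith) ht.1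
  rw [trajExp, mul_comm, pow_mul]
  exact D.norm_traj_le _ _ _ (by linarith [ht.1]) ⟨hlevel.1, hlevel.2.trans hS⟩
    (runClock_mem_Icc hR ht)

theorem hasDerivAt_simTraj (ht : t ∈ Icc (runStart k) (loadStart (k + 1))) :
    HasDerivAt (Y.simTraj k)
      (K.rate D.scale .run t • D.clampedField (D.scale + |t|) (Y.simTraj k t)) t := by
  have hR := D.two_le_scale
  obtain ⟨hl, hlr, -, -, -, -, -⟩ := cycle_times k
  have ht0 : 0 ≤ t := by linarith [ht.1]
  rw [abs_of_nonneg ht0, ApproxFlow.clampedField_eq ((Y.norm_simTraj_le ht).trans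
    (pow_le_pow_right₀ (by linarith) (by simp [clampExp])))]
  exact (D.hasDerivAt_traj _ _ (Y.level_mem_Icc (by linarith)).1
    (runClock_mem_Icc hR ht).1).scomp t hasDerivAt_runClock

theorem norm_init_level_sub_le (ht : t ∈ Icc (loadStart k) (runStart k)) :
    ‖D.init (Y.level t) - D.init (Y.level (runStart k))‖ ≤
      3 * ((D.scale + loadStart k) ^ errExp K.deg * K.leak (D.scale + loadStart k)) := by
  have hR := D.two_le_scale
  obtain ⟨hl, hlr, -, hre, hel, -, -⟩ := cycle_times k
  set s := D.scale + loadStart k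
  have : 3 ≤ s := three_le_scale hR
  have hleak := leak_nonneg (K := K) (s := s) (by linarith)
  calc _ ≤ (D.scale + runStart k) ^ K.deg * |Y.level t - Y.level (runStart k)| :=
        D.norm_init_sub_le _ _ _ (by linarith) (Y.level_mem_Icc_scale (by linarith [ht.1]) ht.2)
          (Y.level_mem_Icc_scale (by linarith) le_rfl)
    _ ≤ s ^ (4 * K.deg) * (3 * (s ^ 4 * K.leak s)) :=
      mul_le_mul (add_pow_le_pow hR (by linarith) (by linarith) le_rfl)
        (Y.abs_level_sub_level_runStart_le ht) (abs_nonneg _) (by positivity)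
    _ = 3 * (s ^ (4 * K.deg + 4) * K.leak s) := by ring
    _ ≤ 3 * (s ^ errExp K.deg * K.leak s) := by
      gcongr
      · linarith
      · unfold errExp
        omega

theorem run_drift_le (ht : t ∈ Icc (loadStart k) (runStart k)) :
    K.rate D.scale .run t * ‖D.clampedField (D.scale + t) (Y.state t)‖ ≤
      (D.scale + loadStart k) ^ errExp K.deg * K.leak (D.scale + loadStart k) := by
  have hR := D.two_le_scale
  obtain ⟨hl, -, -, hre, hel, -, -⟩ := cycle_times k
  have ht0 : 0 ≤ t := by linarith [ht.1]
  rw [mul_comm]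
  exact mul_le_mul ((ApproxFlow.norm_clampedField_le (by linarith) _).trans
    (add_pow_le_pow hR ht0 (by linarith [ht.2]) (by unfold errExp; omega)))
    (rate_run_le_leak hR ht) (rate_nonneg hR ht0) (by positivity)

theorem norm_state_runStart_sub_le
    (hk : ‖Y.state (loadStart k)‖ ≤ (D.scale + loadStart k) ^ (trajExp K.deg + 1)) :
    ‖Y.state (runStart k) - D.init (Y.level (runStart k))‖ ≤
      2 * ((D.scale + loadStart k) ^ errExp K.deg *
        Real.exp (-((D.scale + loadStart k) ^ K.loadExp / 4))) +
      6 * ((D.scale + loadStart k) ^ errExp K.deg * K.leak (D.scale + loadStart k)) := by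
  have hR := D.two_le_scale
  obtain ⟨hl, hlr, hrl, hre, hel, -, -⟩ := cycle_times k
  have hrelax := (Y.relaxesOn_state (by linarith) (fun _ => Y.norm_init_level_sub_le (k := k))
    fun _ => Y.run_drift_le).norm_sub_le_exp ⟨by linarith, le_rfl⟩ (pow_le_integral_load hR)
  set s := D.scale + loadStart k
  have : 3 ≤ s := three_le_scale hR
  have hleak := leak_nonneg (K := K) (s := s) (by linarith)
  have hstart : ‖Y.state (loadStart k) - D.init (Y.level (runStart k))‖ ≤
      s ^ errExp K.deg + s ^ errExp K.deg :=
    (norm_sub_le _ _).trans (add_le_add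
      (hk.trans (pow_le_pow_right₀ (by linarith) (by unfold errExp clampExp; omega)))
      ((Y.norm_init_level_le (by linarith) le_rfl).trans
        (add_pow_le_pow hR (by linarith) (by linarith) (by unfold errExp; omega))))
  have hforget := mul_le_mul_of_nonneg_left hstart (Real.exp_pos (-(s ^ K.loadExp / 4))).le
  have hdrift := mul_le_mul_of_nonneg_left (show runStart k - loadStart k ≤ 3 by linarith)
    (show 0 ≤ s ^ errExp K.deg * K.leak s by positivity)
  linarith

theorem norm_state_sub_simTraj_le_mul_exp (ht : t ∈ Icc (runStart k) (loadStart (k + 1))) :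
    ‖Y.state t - Y.simTraj k t‖ ≤
      (‖Y.state (runStart k) - D.init (Y.level (runStart k))‖ + K.leak (D.scale + loadStart k) *
          (2 * (D.scale + loadStart k) ^ (4 * clampExp K.deg)) * (t - runStart k)) *
        Real.exp (((D.scale + loadStart k) ^ (4 * (K.deg + 2)) *
          (D.scale + loadStart k) ^ (4 * (clampExp K.deg * K.deg)) +
            K.leak (D.scale + loadStart k)) * (t - runStart k)) := by
  have hR := D.two_le_scale
  obtain ⟨hl, hlr, -, -, -, -, -⟩ := cycle_times k
  have hnonneg {u : ℝ} (hu : u ∈ Icc (runStart k) (loadStart (k + 1))) : 0 ≤ u := by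
    linarith [hu.1]
  have hlip : ∀ u ∈ Icc (runStart k) (loadStart (k + 1)), ∀ v w,
      ‖D.clampedField (D.scale + |u|) v - D.clampedField (D.scale + |u|) w‖ ≤
        (D.scale + loadStart k) ^ (4 * (clampExp K.deg * K.deg)) * ‖v - w‖ := fun u hu v w => by
    rw [abs_of_nonneg (hnonneg hu)]
    exact (ApproxFlow.norm_clampedField_sub_le (by linarith [hnonneg hu]) v w).trans
      (mul_le_mul_of_nonneg_right (add_pow_le_pow hR (hnonneg hu) hu.2 le_rfl) (norm_nonneg _))
  rw [← Y.simTraj_runStart]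
  exact norm_sub_le_of_perturbed_field (by positivity)
    (fun u hu => ⟨rate_nonneg hR (hnonneg hu), (pulse_le_pow hR (hnonneg hu)).trans
      (add_pow_le_pow hR (hnonneg hu) hu.2 le_rfl)⟩)
    (fun u hu => ⟨rate_nonneg hR (hnonneg hu), rate_load_le_leak hR hu⟩) hlip
    (fun u hu => (Y.norm_init_level_le (hnonneg hu) le_rfl).trans (add_pow_le_pow hR (hnonneg hu)
      hu.2 (Nat.mul_le_mul_left 4 ((le_trajExp _).trans (Nat.le_add_right _ 3)))))
    (fun u hu => (Y.norm_simTraj_le hu).trans (add_pow_le_pow hR (hnonneg hu) hu.2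
      (Nat.mul_le_mul_left 4 (Nat.le_add_right _ 3))))
    (fun u _ => Y.hasDerivAt_state u) (fun u hu => Y.hasDerivAt_simTraj hu) ht

theorem norm_state_sub_simTraj_le
    (hk : ‖Y.state (loadStart k)‖ ≤ (D.scale + loadStart k) ^ (trajExp K.deg + 1))
    (ht : t ∈ Icc (runStart k) (loadStart (k + 1))) :
    ‖Y.state t - Y.simTraj k t‖ ≤ Real.exp (-(D.scale + loadStart k)) := by
  obtain ⟨-, -, -, -, -, hlen, -⟩ := cycle_times k
  have hbound := Y.norm_state_sub_simTraj_le_mul_exp ht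
  have hload := Y.norm_state_runStart_sub_le hk
  set s := D.scale + loadStart k
  have hs : 3 ≤ s := three_le_scale D.two_le_scale
  have hleak := leak_nonneg (K := K) (s := s) (by linarith)
  have htime : t - runStart k ∈ Icc 0 5 := ⟨by linarith [ht.1], by linarith [ht.2]⟩
  have hforce : K.leak s * (2 * s ^ (4 * clampExp K.deg)) * (t - runStart k) ≤
      10 * (s ^ errExp K.deg * K.leak s) :=
    calc _ ≤ K.leak s * (2 * s ^ errExp K.deg) * 5 := by
          refine mul_le_mul ?_ htime.2 htime.1 (by positivity)
          gcongr
          · linarith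
          · unfold errExp
            omega
      _ = _ := by ring
  have hexponent : (s ^ (4 * (K.deg + 2)) * s ^ (4 * (clampExp K.deg * K.deg)) + K.leak s) *
      (t - runStart k) ≤ (s ^ errExp K.deg + K.leak s) * 5 := by
    refine mul_le_mul (add_le_add_left ?_ _) htime.2 htime.1 (by positivity)
    rw [← pow_add]
    exact pow_le_pow_right₀ (by linarith) (by unfold errExp; omega)
  refine hbound.trans (le_trans ?_ (cycle_error_mul_exp_le (K := K) hs))
  exact mul_le_mul (by linarith) (Real.exp_le_exp.2 hexponent) (Real.exp_pos _).le (by positivity)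

theorem norm_state_le_of_running
    (hk : ‖Y.state (loadStart k)‖ ≤ (D.scale + loadStart k) ^ (trajExp K.deg + 1))
    (ht : t ∈ Icc (runStart k) (loadStart (k + 1))) :
    ‖Y.state t‖ ≤ (D.scale + t) ^ (trajExp K.deg + 1) := by
  obtain ⟨hl, hlr, -, -, -, -, -⟩ := cycle_times k
  have hS : 2 ≤ D.scale + t := by linarith [D.two_le_scale, ht.1]
  have hexp : Real.exp (-(D.scale + loadStart k)) ≤ 1 :=
    Real.exp_le_one_iff.2 (by linarith [D.two_le_scale])
  rw [pow_succ]
  nlinarith [norm_le_insert' (Y.state t) (Y.simTraj k t), Y.norm_simTraj_le ht,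
    Y.norm_state_sub_simTraj_le hk ht,
    one_le_pow₀ (n := trajExp K.deg) (show 1 ≤ D.scale + t by linarith)]

theorem norm_state_loadStart_le (k : ℕ) :
    ‖Y.state (loadStart k)‖ ≤ (D.scale + loadStart k) ^ (trajExp K.deg + 1) := by
  induction k with
  | zero => exact Y.norm_state_le_of_le_loadStart_zero (by linarith [(cycle_times 0).1]) le_rfl
  | succ k ih =>
    obtain ⟨-, -, -, hre, hel, -, -⟩ := cycle_times k
    exact Y.norm_state_le_of_running ih ⟨by linarith, le_rfl⟩

theorem norm_state_le (ht : 0 ≤ t) : ‖Y.state t‖ ≤ (D.scale + t) ^ clampExp K.deg := by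
  have hR := D.two_le_scale
  have hmono : (D.scale + t) ^ (trajExp K.deg + 1) ≤ (D.scale + t) ^ clampExp K.deg :=
    pow_le_pow_right₀ (by linarith) (Nat.add_le_add_left (by norm_num) _)
  rcases le_total t (loadStart 0) with hinit | hcycles
  · exact (Y.norm_state_le_of_le_loadStart_zero ht hinit).trans hmono
  obtain ⟨k, hk⟩ := exists_mem_cycle hcycles
  obtain ⟨hl, -, hrl, -, -, -, -⟩ := cycle_times k
  rcases le_total t (runStart k) with hload | hrun
  · exact Y.norm_state_le_of_not_running (by linarith) hk.1 (by linarith)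
      (fun u hu => cos_sub_run_le_half k ⟨hu.1, hu.2.trans hload⟩)
      ((le_trajExp _).trans (Nat.le_succ _)) (Y.norm_state_loadStart_le k)
  · exact (Y.norm_state_le_of_running (Y.norm_state_loadStart_le k) ⟨hrun, hk.2⟩).trans hmono

theorem norm_output_le (ht : 0 ≤ t) : ‖Y.output t‖ ≤ (D.scale + t) ^ clampExp K.deg := by
  have hR := D.two_le_scale
  have hread : ∀ u ∈ Icc 0 t, ‖D.readout (Y.state u) - 0‖ ≤ (D.scale + t) ^ clampExp K.deg :=
    fun u hu => by
      rw [sub_zero]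
      exact (ApproxFlow.norm_readout_le _).trans ((Y.norm_state_le hu.1).trans
        (pow_le_pow_left₀ (by linarith [hu.1]) (by linarith [hu.2]) _))
  have := (Y.relaxesOn_output le_rfl hread).norm_sub_le_of_le ⟨ht, le_rfl⟩
    (by rw [Y.output_zero, sub_zero, norm_zero]; positivity)
  rwa [sub_zero] at this

theorem loadStart_sub_le_level (k : ℕ) : loadStart k - 5 ≤ Y.level (loadStart k) := by
  cases k with
  | zero =>
    rw [loadStart_zero]
    have hlevel := Y.level_mem_Icc (t := Real.pi / 3) (by positivity)
    linarith [Real.pi_lt_d2, hlevel.1]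
  | succ k =>
    have hR := D.two_le_scale
    obtain ⟨hl, hlr, -, hre, hel, hlen, -⟩ := cycle_times k
    have hs := three_le_scale hR (k := k)
    have hrelax := (Y.relaxesOn_level (c := loadStart (k + 1)) (η := 3) (by linarith) fun u hu =>
      abs_le.2 ⟨by linarith [hu.1], by linarith [hu.2]⟩).norm_sub_le_exp ⟨by linarith, le_rfl⟩
      (pow_le_integral_emit hR)
    have hstart : ‖Y.level (emitStart k) - loadStart (k + 1)‖ ≤
        (D.scale + loadStart k) ^ errExp K.deg := by
      have hlevel := Y.level_mem_Icc (t := emitStart k) (by linarith)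
      have hpow := add_pow_le_pow hR (k := k) (t := loadStart (k + 1)) (by linarith) le_rfl
        (show 4 * 1 ≤ errExp K.deg by unfold errExp; omega)
      rw [Real.norm_of_nonpos (by linarith [hlevel.2])]
      linarith [hlevel.1, pow_one (D.scale + loadStart (k + 1))]
    have hexp : Real.exp (-(D.scale + loadStart k)) ≤ 1 := Real.exp_le_one_iff.2 (by linarith)
    have := mul_le_mul_of_nonneg_left hstart
      (Real.exp_pos (-((D.scale + loadStart k) ^ K.loadExp / 4))).le
    rw [Real.norm_eq_abs] at hrelax
    linarith [(abs_le.1 hrelax).1, pow_mul_exp_load_le (K := K) hs]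

/-- The error with which cycle `k` approximates the limit. -/
def emitError (k : ℕ) : ℝ := Real.exp (-(loadStart k - 5))

theorem norm_readout_state_sub_limit_le (ht : t ∈ Icc (emitStart k) (loadStart (k + 1))) :
    ‖D.readout (Y.state t) - D.limit‖ ≤ 2 * emitError k := by
  have hR := D.two_le_scale
  obtain ⟨hl, hlr, -, hre, -, -, -⟩ := cycle_times k
  have htrack : ‖D.readout (Y.state t) - D.readout (Y.simTraj k t)‖ ≤ emitError k :=
    (ApproxFlow.norm_readout_sub_le _ _).trans ((Y.norm_state_sub_simTraj_le
      (Y.norm_state_loadStart_le k) ⟨by linarith [ht.1], ht.2⟩).trans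
      (Real.exp_le_exp.2 (by linarith)))
  have hlevel : loadStart k - 5 ≤ Y.level (runStart k) := (Y.loadStart_sub_le_level k).trans
    (Y.monotoneOn_level (mem_Ici.2 (by linarith)) (mem_Ici.2 (by linarith)) (by linarith))
  have hconv : ‖D.readout (Y.simTraj k t) - D.limit‖ ≤ emitError k :=
    (D.norm_readout_traj_sub_le (D.scale + runStart k) _ _ (by linarith)
      (Y.level_mem_Icc_scale (by linarith) le_rfl) (pow_le_integral_run hR ht.1)).trans
      (Real.exp_le_exp.2 (neg_le_neg hlevel))
  linarith [norm_sub_le_norm_sub_add_norm_sub (D.readout (Y.state t))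
    (D.readout (Y.simTraj k t)) D.limit]

theorem norm_output_sub_limit_le_of_idle (ht : t ∈ Icc (loadStart k) (emitStart k)) :
    ‖Y.output t - D.limit‖ ≤ ‖Y.output (loadStart k) - D.limit‖ + emitError k := by
  have hR := D.two_le_scale
  obtain ⟨hl, -, -, -, hel, -, hlen⟩ := cycle_times k
  have hs := three_le_scale hR (k := k)
  have hrelax := (Y.relaxesOn_output (by linarith) fun u hu =>
    have hu0 : 0 ≤ u := by linarith [hu.1]
    ApproxFlow.norm_sub_limit_le (k := k) hu0 (by linarith [hu.2])
      ((ApproxFlow.norm_readout_le _).trans (Y.norm_state_le hu0))).norm_sub_le_add_integral_mul ht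
  have hint : ∫ u in loadStart k..t, K.rate D.scale .emit u ≤
      7 * K.leak (D.scale + loadStart k) :=
    calc _ ≤ ∫ _ in loadStart k..t, K.leak (D.scale + loadStart k) :=
          intervalIntegral.integral_mono_on ht.1 (continuous_rate.intervalIntegrable _ _) (by simp)
            fun u hu => rate_emit_le_leak hR ⟨hu.1, hu.2.trans ht.2⟩
      _ = (t - loadStart k) * K.leak (D.scale + loadStart k) := by
        rw [intervalIntegral.integral_const, smul_eq_mul]
      _ ≤ 7 * K.leak (D.scale + loadStart k) :=
        mul_le_mul_of_nonneg_right (by linarith [ht.2]) (leak_nonneg (by linarith))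
  have hexp : Real.exp (-(D.scale + loadStart k)) ≤ emitError k :=
    Real.exp_le_exp.2 (by linarith)
  have hdrift := mul_le_mul_of_nonneg_right hint
    (show 0 ≤ 2 * (D.scale + loadStart k) ^ errExp K.deg by positivity)
  linarith [pow_mul_leak_le (K := K) hs, Real.exp_pos (-(D.scale + loadStart k))]

theorem norm_output_sub_limit_le_of_mem_cycle (ht : t ∈ Icc (loadStart k) (loadStart (k + 1))) :
    ‖Y.output t - D.limit‖ ≤ ‖Y.output (loadStart k) - D.limit‖ + 3 * emitError k := by
  obtain ⟨hl, hlr, -, hre, -, -, -⟩ := cycle_times k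
  have herr : 0 < emitError k := Real.exp_pos _
  rcases le_total t (emitStart k) with hidle | hemit
  · linarith [Y.norm_output_sub_limit_le_of_idle ⟨ht.1, hidle⟩]
  · have hrelax := (Y.relaxesOn_output (by linarith) fun _ =>
      Y.norm_readout_state_sub_limit_le (k := k)).norm_sub_le_add ⟨hemit, ht.2⟩
    linarith [Y.norm_output_sub_limit_le_of_idle (k := k) ⟨by linarith, le_rfl⟩]

theorem norm_output_loadStart_succ_sub_limit_le (k : ℕ) :
    ‖Y.output (loadStart (k + 1)) - D.limit‖ ≤ 3 * emitError k := by
  have hR := D.two_le_scale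
  obtain ⟨hl, hlr, -, hre, hel, -, -⟩ := cycle_times k
  have hs := three_le_scale hR (k := k)
  have hrelax := (Y.relaxesOn_output (by linarith) fun _ =>
    Y.norm_readout_state_sub_limit_le (k := k)).norm_sub_le_exp ⟨by linarith, le_rfl⟩
    (pow_le_integral_emit hR)
  have hforget := mul_le_mul_of_nonneg_left
    (ApproxFlow.norm_sub_limit_le (k := k) (by linarith) (by linarith)
      (Y.norm_output_le (t := emitStart k) (by linarith)))
    (Real.exp_pos (-((D.scale + loadStart k) ^ K.loadExp / 4))).le
  have hexp : Real.exp (-(D.scale + loadStart k)) ≤ emitError k :=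
    Real.exp_le_exp.2 (by linarith)
  linarith [pow_mul_exp_load_le (K := K) hs, Real.exp_pos (-(D.scale + loadStart k))]

theorem emitError_succ_le (k : ℕ) : 3 * emitError (k + 1) ≤ emitError k := by
  obtain ⟨-, hlr, -, hre, hel, -, -⟩ := cycle_times k
  have h3 : 3 ≤ Real.exp 2 := by linarith [Real.add_one_le_exp 2]
  calc 3 * emitError (k + 1) ≤ Real.exp 2 * emitError (k + 1) :=
        mul_le_mul_of_nonneg_right h3 (Real.exp_pos _).le
    _ = Real.exp (2 + -(loadStart (k + 1) - 5)) := (Real.exp_add _ _).symm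
    _ ≤ emitError k := Real.exp_le_exp.2 (by linarith)

theorem norm_output_sub_limit_le_exp_neg {μ : ℝ} (hμ : 0 ≤ μ) (ht : μ + 22 ≤ t) :
    ‖Y.output t - D.limit‖ ≤ Real.exp (-μ) := by
  have hload0 : loadStart 0 ≤ 2 := by rw [loadStart_zero]; linarith [Real.pi_lt_d2]
  obtain ⟨_ | k, hk⟩ := exists_mem_cycle (t := t) (by linarith)
  · linarith [cycle_times 0, hk.2]
  obtain ⟨-, -, -, -, -, -, hlen⟩ := cycle_times k
  obtain ⟨-, -, -, -, -, -, hlen'⟩ := cycle_times (k + 1)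
  have h4 : 4 ≤ Real.exp 3 := by linarith [Real.add_one_le_exp 3]
  calc ‖Y.output t - D.limit‖ ≤ 4 * emitError k := by
        linarith [Y.norm_output_sub_limit_le_of_mem_cycle hk,
          Y.norm_output_loadStart_succ_sub_limit_le k, emitError_succ_le k]
    _ ≤ Real.exp 3 * emitError k := mul_le_mul_of_nonneg_right h4 (Real.exp_pos _).le
    _ = Real.exp (3 + -(loadStart k - 5)) := (Real.exp_add _ _).symm
    _ ≤ Real.exp (-μ) := Real.exp_le_exp.2 (by linarith [hk.2])

end Simulation

end Tracking

section PolynomialRealization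

open MvPolynomial

theorem hasDerivAt_gate {R : ℝ} {j : ℕ} {φ t : ℝ} :
    HasDerivAt (gate R j φ)
      (((j * (R + t) ^ (j - 1) * t + (R + t) ^ j) * (Real.cos (t - φ) - 3 / 4) -
        (R + t) ^ j * t * Real.sin (t - φ)) * gate R j φ t * (1 - gate R j φ t)) t := by
  have hpow : HasDerivAt (fun t => (R + t) ^ j * t)
      (j * (R + t) ^ (j - 1) * t + (R + t) ^ j) t := by
    simpa using (((hasDerivAt_id' t).const_add R).fun_pow j).fun_mul (hasDerivAt_id' t)
  have hcos : HasDerivAt (fun t => Real.cos (t - φ) - 3 / 4) (-Real.sin (t - φ)) t := by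
    simpa using (((hasDerivAt_id t).sub_const φ).cos).sub_const (3 / 4)
  refine ((Real.hasDerivAt_sigmoid _).comp t (hpow.mul hcos)).congr_deriv ?_
  simp only [gate, Pi.mul_apply]
  ring

/-- A polynomial of the input that dominates its norm; it serves as initial scale of the
simulation. -/
def scalePoly (n : ℕ) : MvPolynomial (Fin n) ℝ := 2 + ∑ i, X i ^ 2

section Input

variable {n : ℕ} (x : Fin n → ℝ)

theorem eval_scalePoly : eval x (scalePoly n) = 2 + ∑ i, x i ^ 2 := by
  simp [scalePoly]

theorem two_le_eval_scalePoly : 2 ≤ eval x (scalePoly n) := by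
  rw [eval_scalePoly]
  exact le_add_of_nonneg_right (Finset.sum_nonneg fun i _ => sq_nonneg (x i))

theorem norm_le_eval_scalePoly : ‖x‖ ≤ eval x (scalePoly n) := by
  refine (pi_norm_le_iff_of_nonneg (zero_le_two.trans (two_le_eval_scalePoly x))).2 fun i => ?_
  have hi : x i ^ 2 ≤ ∑ i, x i ^ 2 :=
    Finset.single_le_sum (f := fun i => x i ^ 2) (fun i _ => sq_nonneg _) (Finset.mem_univ i)
  rw [eval_scalePoly, Real.norm_eq_abs]
  nlinarith [sq_abs (x i), sq_nonneg (|x i| - 1)]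

theorem eval_scalePoly_le : eval x (scalePoly n) ≤ 2 + n * ‖x‖ ^ 2 := by
  have hsum : ∑ i, x i ^ 2 ≤ Fintype.card (Fin n) • ‖x‖ ^ 2 :=
    Finset.sum_le_card_nsmul _ _ _ fun i _ => sq_le_sq' (abs_le.1 (norm_le_pi_norm x i)).1
      (abs_le.1 (norm_le_pi_norm x i)).2
  rw [eval_scalePoly]
  simpa using hsum

variable {x}

theorem norm_snoc_le {S μ : ℝ} (hx : ‖x‖ ≤ S) (hμ : |μ| ≤ S) :
    ‖(Fin.snoc x μ : Fin (n + 1) → ℝ)‖ ≤ S := by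
  refine (pi_norm_le_iff_of_nonneg ((norm_nonneg x).trans hx)).2 (Fin.lastCases ?_ fun i => ?_)
  · simpa using hμ
  · simpa using (norm_le_pi_norm x i).trans hx

variable (x)

theorem norm_snoc_sub_snoc_le (μ ν : ℝ) :
    ‖(Fin.snoc x μ : Fin (n + 1) → ℝ) - Fin.snoc x ν‖ ≤ |μ - ν| := by
  refine (pi_norm_le_iff_of_nonneg (abs_nonneg _)).2 (Fin.lastCases ?_ fun i => ?_) <;> simp

theorem continuous_snoc_right : Continuous fun μ : ℝ => (Fin.snoc x μ : Fin (n + 1) → ℝ) := by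
  fun_prop

end Input

variable {m d n : ℕ}

/-- The data of the flow are given by the polynomial vectors `p` and `q` of an `AWP` system for the
input `x`; its readout consists of the first `m` components. -/
structure ApproxFlow.IsPolynomial {c : ℕ} (D : ApproxFlow c (Fin d) (Fin m → ℝ)) (hd : m ≤ d)
    (p : Fin d → MvPolynomial (Fin d) ℝ) (q : Fin d → MvPolynomial (Fin (n + 1)) ℝ)
    (x : Fin n → ℝ) : Prop where
  scale_eq : D.scale = eval x (scalePoly n)
  field_eq : D.field = evalVec p
  init_eq : D.init = fun μ => evalVec q (Fin.snoc x μ)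
  readout_eq : D.readout = fun v i => v (Fin.castLE hd i)

theorem AWP.exists_approxFlow {dom : Set (Fin n → ℝ)} {f : (Fin n → ℝ) → (Fin m → ℝ)}
    (hf : AWP dom f) : ∃ (d : ℕ) (hd : m ≤ d) (p : Fin d → MvPolynomial (Fin d) ℝ)
      (q : Fin d → MvPolynomial (Fin (n + 1)) ℝ) (c : ℕ), 1 ≤ c ∧ ∀ x ∈ dom,
        ∃ D : ApproxFlow c (Fin d) (Fin m → ℝ), D.limit = f x ∧ D.IsPolynomial hd p q x := by
  obtain ⟨Ω, Υ, hΩ, hΥ, d, hd, p, q, H⟩ := hf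
  obtain ⟨c, hp, hp', hq, hq', hΩc, hΥc, hc⟩ := ((eventually_norm_evalVec_le_pow p).and <|
    (eventually_norm_evalVec_sub_le_pow_mul p).and <| (eventually_norm_evalVec_le_pow q).and <|
    (eventually_norm_evalVec_sub_le_pow_mul q).and <| hΩ.eventually_le_pow.and <|
    hΥ.eventually_le_pow.and <| eventually_ge_atTop 1).exists
  refine ⟨d, hd, p, q, c, hc, fun x hx => ?_⟩
  choose! y hy0 hy hlimit hbound using H x hx
  have h2 {S : ℝ} (hS : eval x (scalePoly n) ≤ S) : 2 ≤ S := (two_le_eval_scalePoly x).trans hS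
  have hxS {S : ℝ} (hS : eval x (scalePoly n) ≤ S) : |‖x‖| ≤ S := by
    rw [abs_norm]
    exact (norm_le_eval_scalePoly x).trans hS
  have habs {S u : ℝ} (hu : u ∈ Icc 0 S) : |u| ≤ S := (abs_of_nonneg hu.1).trans_le hu.2
  have hsnoc {S μ : ℝ} (hS : eval x (scalePoly n) ≤ S) (hμ : μ ∈ Icc 0 S) :
      ‖(Fin.snoc x μ : Fin (n + 1) → ℝ)‖ ≤ S :=
    norm_snoc_le ((norm_le_eval_scalePoly x).trans hS) (habs hμ)
  exact ⟨{
    scale := eval x (scalePoly n)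
    field := evalVec p
    init := fun μ => evalVec q (Fin.snoc x μ)
    traj := y
    readout := fun v i => v (Fin.castLE hd i)
    limit := f x
    two_le_scale := two_le_eval_scalePoly x
    continuous_field := continuous_evalVec p
    continuous_init := (continuous_evalVec q).comp (continuous_snoc_right x)
    lipschitz_readout := LipschitzWith.of_dist_le_mul fun v w => by
      rw [NNReal.coe_one, one_mul, dist_pi_le_iff dist_nonneg]
      exact fun i => dist_le_pi_dist v w _
    readout_zero := rfl
    traj_zero := hy0
    hasDerivAt_traj := fun μ τ hμ hτ => hy μ hμ τ hτ
    norm_field_le := fun S v hS => hp S (h2 hS) v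
    norm_field_sub_le := fun S v w hS => hp' S (h2 hS) v w
    norm_init_le := fun S μ hS hμ => hq S (h2 hS) _ (hsnoc hS hμ)
    norm_init_sub_le := fun S μ ν hS hμ hν =>
      (hq' S (h2 hS) _ _ (hsnoc hS hμ) (hsnoc hS hν)).trans (mul_le_mul_of_nonneg_left
        (norm_snoc_sub_snoc_le x μ ν) (pow_nonneg (zero_le_two.trans (h2 hS)) c))
    norm_traj_le := fun S μ τ hS hμ hτ => (hbound μ hμ.1 τ hτ.1).trans
      (hΥc S (h2 hS) _ _ _ (hxS hS) (habs hμ) (habs hτ))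
    norm_readout_traj_sub_le := fun S μ τ hS hμ hτ => hlimit μ hμ.1 τ
      ((pow_nonneg (zero_le_two.trans (h2 hS)) c).trans hτ)
      ((hΩc S (h2 hS) _ _ (hxS hS) (habs hμ)).trans hτ) }, rfl, rfl, rfl, rfl, rfl⟩

/-- The variables of the polynomial system that carries out the simulation. The variable `scale`
has the value `R + t` for the initial scale `R`. -/
inductive SimVar (m d n : ℕ)
  | output (i : Fin m)
  | state (i : Fin d)
  | input (i : Fin n)
  | level
  | time
  | scale
  | sin
  | cos
  | gate (ph : Phase)
  deriving Fintype

namespace Schedule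

variable (K : Schedule)

/-- The polynomial whose value is the rate of the phase `ph`. -/
def ratePoly (ph : Phase) : MvPolynomial (SimVar m d n) ℝ :=
  X .time * X .scale ^ K.rateExp ph * X (.gate ph)

/-- The polynomial whose value is the derivative of the gate of the phase `ph`. -/
def gateField (ph : Phase) : MvPolynomial (SimVar m d n) ℝ :=
  ((C (K.gateExp : ℝ) * X .scale ^ (K.gateExp - 1) * X .time + X .scale ^ K.gateExp) *
      (X .cos * C (Real.cos ph.angle) + X .sin * C (Real.sin ph.angle) - C (3 / 4)) -
    X .scale ^ K.gateExp * X .time *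
      (X .sin * C (Real.cos ph.angle) - X .cos * C (Real.sin ph.angle))) *
  X (.gate ph) * (1 - X (.gate ph))

/-- The vector field of the polynomial system that simulates `y' = p(y)`, `y(0) = q(x, μ)`. -/
def simField (hd : m ≤ d) (p : Fin d → MvPolynomial (Fin d) ℝ)
    (q : Fin d → MvPolynomial (Fin (n + 1)) ℝ) : SimVar m d n → MvPolynomial (SimVar m d n) ℝ
  | .output i => K.ratePoly .emit * (X (.state (Fin.castLE hd i)) - X (.output i))
  | .state i => K.ratePoly .run * rename .state (p i) +
      K.ratePoly .load *
        (rename (Fin.snoc (α := fun _ => SimVar m d n) .input .level) (q i) - X (.state i))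
  | .input _ => 0
  | .level => K.ratePoly .emit * (X .time - X .level)
  | .time => 1
  | .scale => 1
  | .sin => X .cos
  | .cos => -X .sin
  | .gate ph => K.gateField ph

end Schedule

/-- The initial values of the polynomial simulation as polynomials in the input. -/
def simInit (q : Fin d → MvPolynomial (Fin (n + 1)) ℝ) : SimVar m d n → MvPolynomial (Fin n) ℝ
  | .output _ => 0
  | .state i => bind₁ (Fin.snoc (α := fun _ => MvPolynomial (Fin n) ℝ) X 0) (q i)
  | .input i => X i
  | .level => 0
  | .time => 0
  | .scale => scalePoly n
  | .sin => 0
  | .cos => 1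
  | .gate _ => C (1 / 2)

namespace Simulation

open Schedule

variable {K : Schedule} {D : ApproxFlow K.deg (Fin d) (Fin m → ℝ)} {hd : m ≤ d}
  {p : Fin d → MvPolynomial (Fin d) ℝ} {q : Fin d → MvPolynomial (Fin (n + 1)) ℝ}
  {x : Fin n → ℝ} (Y : Simulation K D) {t : ℝ}

/-- The simulation together with the auxiliary quantities that make it a solution of a polynomial
system. -/
def curve (x : Fin n → ℝ) (t : ℝ) : SimVar m d n → ℝ
  | .output i => Y.output t i
  | .state i => Y.state t i
  | .input i => x i
  | .level => Y.level t
  | .time => t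
  | .scale => D.scale + t
  | .sin => Real.sin t
  | .cos => Real.cos t
  | .gate ph => gate D.scale K.gateExp ph.angle t

theorem curve_zero (hD : D.IsPolynomial hd p q x) : Y.curve x 0 = evalVec (simInit q) x := by
  funext v
  cases v with
  | state i =>
    have hsnoc : evalVec (Fin.snoc (α := fun _ => MvPolynomial (Fin n) ℝ) X 0) x =
        Fin.snoc (α := fun _ => ℝ) x 0 := by
      refine funext (Fin.lastCases ?_ fun k => ?_) <;> simp [evalVec]
    simp only [curve, Y.state_zero, hD.init_eq, ← hsnoc, ← evalVec_bind₁]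
    rfl
  | _ => simp [curve, evalVec, simInit, Y.output_zero, Y.level_zero, hD.scale_eq, gate_zero]

theorem eval_ratePoly (ph : Phase) :
    eval (Y.curve x t) (K.ratePoly ph) = K.rate D.scale ph t := by
  simp [ratePoly, rate, pulse, curve]

theorem hasDerivAt_gate_eval (ph : Phase) : HasDerivAt (gate D.scale K.gateExp ph.angle)
    (eval (Y.curve x t) (K.gateField ph)) t := by
  refine hasDerivAt_gate.congr_deriv ?_
  simp [gateField, curve, Real.cos_sub, Real.sin_sub]

theorem hasDerivAt_state_eval (hD : D.IsPolynomial hd p q x) (ht : 0 ≤ t) (i : Fin d) :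
    HasDerivAt (fun t => Y.state t i) (eval (Y.curve x t) (K.simField hd p q (.state i))) t := by
  have hstate : Y.curve x t ∘ .state = Y.state t := rfl
  have hinput : Y.curve x t ∘ (Fin.snoc (α := fun _ => SimVar m d n) .input .level) =
      Fin.snoc (α := fun _ => ℝ) x (Y.level t) := by
    refine funext (Fin.lastCases ?_ fun k => ?_) <;> simp [curve]
  refine (hasDerivAt_pi.1 (Y.hasDerivAt_state t) i).congr_deriv ?_
  rw [abs_of_nonneg ht, ApproxFlow.clampedField_eq (Y.norm_state_le ht), hD.field_eq, hD.init_eq]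
  simp [simField, eval_ratePoly, eval_rename, hstate, hinput, evalVec, curve]

theorem hasDerivAt_curve (hD : D.IsPolynomial hd p q x) (ht : 0 ≤ t) :
    HasDerivAt (Y.curve x) (evalVec (K.simField hd p q) (Y.curve x t)) t := by
  refine hasDerivAt_pi.2 fun v => ?_
  cases v with
  | output i =>
    refine (hasDerivAt_pi.1 (Y.hasDerivAt_output t) i).congr_deriv ?_
    simp [evalVec, simField, eval_ratePoly, hD.readout_eq, curve]
  | state i => exact Y.hasDerivAt_state_eval hD ht i
  | input i => simpa [evalVec, simField, curve] using hasDerivAt_const t (x i)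
  | level =>
    refine (Y.hasDerivAt_level t).congr_deriv ?_
    simp [evalVec, simField, eval_ratePoly, curve]
  | time => simpa [evalVec, simField, curve] using hasDerivAt_id' t
  | scale => simpa [evalVec, simField, curve] using (hasDerivAt_id' t).const_add D.scale
  | sin => simpa [evalVec, simField, curve] using Real.hasDerivAt_sin t
  | cos => simpa [evalVec, simField, curve] using Real.hasDerivAt_cos t
  | gate ph => exact Y.hasDerivAt_gate_eval ph

theorem norm_curve_le (hx : ‖x‖ ≤ D.scale) (ht : 0 ≤ t) :
    ‖Y.curve x t‖ ≤ (D.scale + t) ^ clampExp K.deg := by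
  have hR := D.two_le_scale
  have hS : D.scale + t ≤ (D.scale + t) ^ clampExp K.deg :=
    le_self_pow₀ (by linarith) (by simp [clampExp])
  refine (pi_norm_le_iff_of_nonneg (by positivity)).2 fun v => ?_
  cases v with
  | output i => exact (norm_le_pi_norm (Y.output t) i).trans (Y.norm_output_le ht)
  | state i => exact (norm_le_pi_norm (Y.state t) i).trans (Y.norm_state_le ht)
  | input i => exact (norm_le_pi_norm x i).trans (by linarith)
  | level =>
    have hlevel := Y.level_mem_Icc ht
    exact (Real.norm_of_nonneg hlevel.1).trans_le (by linarith [hlevel.2])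
  | time => exact (Real.norm_of_nonneg ht).trans_le (by linarith)
  | scale => exact (Real.norm_of_nonneg (show 0 ≤ D.scale + t by linarith)).trans_le hS
  | sin => exact (Real.abs_sin_le_one t).trans (by linarith)
  | cos => exact (Real.abs_cos_le_one t).trans (by linarith)
  | gate ph =>
    exact (Real.norm_of_nonneg gate_nonneg).trans_le ((Real.sigmoid_le_one _).trans (by linarith))

theorem length_curve_le {a : ℕ} (hx : ‖x‖ ≤ D.scale) (ha : ∀ S, 2 ≤ S → ∀ v, ‖v‖ ≤ S →
      ‖evalVec (K.simField hd p q) v‖ ≤ S ^ a) (ht : 0 ≤ t) :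
    ∫ s in 0..t, ‖evalVec (K.simField hd p q) (Y.curve x s)‖ ≤
      (D.scale + t) ^ (clampExp K.deg * a + 1) := by
  have hR := D.two_le_scale
  have hspeed : ∀ s ∈ uIoc 0 t, ‖‖evalVec (K.simField hd p q) (Y.curve x s)‖‖ ≤
      (D.scale + t) ^ (clampExp K.deg * a) := fun s hs => by
    rw [uIoc_of_le ht] at hs
    have hs2 : 2 ≤ (D.scale + s) ^ clampExp K.deg :=
      (show 2 ≤ D.scale + s by linarith [hs.1]).trans
        (le_self_pow₀ (by linarith [hs.1]) (by simp [clampExp]))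
    rw [norm_norm]
    calc _ ≤ ((D.scale + s) ^ clampExp K.deg) ^ a := ha _ hs2 _ (Y.norm_curve_le hx hs.1.le)
      _ = (D.scale + s) ^ (clampExp K.deg * a) := (pow_mul _ _ _).symm
      _ ≤ (D.scale + t) ^ (clampExp K.deg * a) :=
        pow_le_pow_left₀ (by linarith [hs.1]) (by linarith [hs.2]) _
  have h := (le_abs_self _).trans (intervalIntegral.norm_integral_le_of_norm_le_const hspeed)
  rw [sub_zero, abs_of_nonneg ht] at h
  refine h.trans ?_
  rw [pow_succ]
  gcongr
  linarith

theorem le_length_curve (hD : D.IsPolynomial hd p q x) (ht : 0 ≤ t) :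
    t ≤ ∫ s in 0..t, ‖evalVec (K.simField hd p q) (Y.curve x s)‖ := by
  have hspeed (s : ℝ) : 1 ≤ ‖evalVec (K.simField hd p q) (Y.curve x s)‖ := by
    simpa [evalVec, simField] using
      norm_le_pi_norm (evalVec (K.simField hd p q) (Y.curve x s)) .time
  simpa using intervalIntegral.integral_mono_on ht (by simp)
    (intervalIntegrable_evalVec (fun _ => Y.hasDerivAt_curve hD) ht).norm fun s _ => hspeed s

end Simulation

theorem add_mul_sq_add_lt_cube {n r μ t : ℝ} (hn : 0 ≤ n) (hr : 0 ≤ r) (hμ : 0 ≤ μ)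
    (ht : t < μ + 22) : 2 + n * r ^ 2 + t < (24 + n + r + μ) ^ 3 := by
  set B := 24 + n + r + μ
  have hnr : n * r ^ 2 ≤ (B - 1) * B ^ 2 := by gcongr <;> linarith
  nlinarith

theorem AWP.ap {dom : Set (Fin n → ℝ)} {f : (Fin n → ℝ) → (Fin m → ℝ)} (hf : AWP dom f) :
    AP dom f := by
  obtain ⟨d, hd, p, q, c, hc, hflow⟩ := hf.exists_approxFlow
  obtain ⟨K, rfl⟩ := exists_schedule hc
  obtain ⟨a, ha⟩ := (eventually_norm_evalVec_le_pow (K.simField hd p q)).exists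
  refine AP.of_fintype ⟨SimVar.output, fun _ _ => SimVar.output.inj⟩ (K.simField hd p q) (simInit q)
    (Ω := fun r μ => ((24 + n + r + μ) ^ 3) ^ (clampExp K.deg * a + 1))
    ⟨⟨((C (24 + n : ℝ) + X 0 + X 1) ^ 3) ^ (clampExp K.deg * a + 1), by simp⟩,
      by intros; positivity⟩ fun x hx => ?_
  obtain ⟨D, hlimit, hD⟩ := hflow x hx
  obtain ⟨Y⟩ := Simulation.nonempty (K := K) (D := D)
  have hscale : ‖x‖ ≤ D.scale := hD.scale_eq ▸ norm_le_eval_scalePoly x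
  refine ⟨Y.curve x, Y.curve_zero hD, fun t => Y.hasDerivAt_curve hD, fun t ht μ hμ hle => ?_,
    fun t => Y.le_length_curve hD⟩
  refine hlimit ▸ Y.norm_output_sub_limit_le_exp_neg hμ (not_lt.1 fun hlt => hle.not_gt ?_)
  have hbase : D.scale + t < (24 + n + ‖x‖ + μ) ^ 3 := by
    linarith [add_mul_sq_add_lt_cube n.cast_nonneg (norm_nonneg x) hμ hlt, hD.scale_eq,
      eval_scalePoly_le x]
  exact (Y.length_curve_le hscale ha ht).trans_lt
    (pow_lt_pow_left₀ hbase (by linarith [D.two_le_scale]) (Nat.succ_ne_zero _))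

end PolynomialRealization

/-- **`AWP ⊆ AP`**: every partial function in `AWP` also belongs to `AP`;
consequently the two classes coincide: `AP = AWP`. -/
theorem awp_subset_ap {n m : ℕ} (dom : Set (Fin n → ℝ))
    (f : (Fin n → ℝ) → (Fin m → ℝ)) :
    (AWP dom f → AP dom f) ∧ (AP dom f ↔ AWP dom f) := by
  exact ⟨AWP.ap, AP.awp, AWP.ap⟩
end
end
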